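/- arXiv:2201.09598 — 10 statements merged into one kernel-verified Lean document; each statement's English description precedes it below -/
import Mathlib

section
/- Let P12, X12 ∈ ℝ^{n×n} be arbitrary and P22, X22 ∈ ℝ^{n×n} be symmetric positive definite. Define h : ℝ^{n×n} → ℝ by h(H) = Tr(P12 H X12^T) + Tr(P12^T X12 H^T) + Tr(P22 H X22 H^T), and set H* = −P22^{-1} P12^T X12 X22^{-1}. Then for every H ∈ ℝ^{n×n}, h(H) − h(H*) = Tr(P22 (H − H*) X22 (H − H*)^T) ≥ 0, with equality if and only if H = H*. Hence H* is the unique global minimizer of h over ℝ^{n×n}. -/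
/-!
Completing the square: `Hstar` solves the stationarity equation `P22 * Hstar * X22 = -(P12ᵀ * X12)`,
which turns the linear part of `h` into `-2 * Tr (P22 * Hstar * X22 * Hᵀ)`; the two cross terms
agree because `P22` and `X22` are symmetric. What remains is the quadratic form
`D ↦ Tr (P22 * D * X22 * Dᵀ)`. Factoring `P22 = Aᵀ * A` and `X22 = B * Bᵀ` with `A`, `B` invertible
identifies it with the squared Frobenius norm of `A * D * B`, hence it is positive definite.
-/

open Matrix

open scoped MatrixOrder Matrix.Norms.L2Operator in
lemma trace_form_nonneg_and_eq_zero_iff {n : ℕ} {P X : Matrix (Fin n) (Fin n) ℝ}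
    (hP : P.PosDef) (hX : X.PosDef) (D : Matrix (Fin n) (Fin n) ℝ) :
    0 ≤ (P * D * X * Dᵀ).trace ∧ ((P * D * X * Dᵀ).trace = 0 ↔ D = 0) := by
  obtain ⟨A, hA, rfl⟩ := CStarAlgebra.isStrictlyPositive_iff_eq_star_mul_self.mp
    hP.isStrictlyPositive
  obtain ⟨B, hB, rfl⟩ := CStarAlgebra.isStrictlyPositive_iff_eq_mul_star_self.mp
    hX.isStrictlyPositive
  have key : (star A * A * D * (B * star B) * Dᵀ).trace
      = ((A * D * B)ᴴ * (A * D * B)).trace := by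
    rw [Matrix.trace_mul_comm (A * D * B)ᴴ]
    simp only [star_eq_conjTranspose, conjTranspose_eq_transpose_of_trivial, transpose_mul,
      Matrix.mul_assoc]
    rw [Matrix.trace_mul_comm]
    simp only [Matrix.mul_assoc]
  rw [key]
  refine ⟨(posSemidef_conjTranspose_mul_self _).trace_nonneg, ?_⟩
  rw [trace_conjTranspose_mul_self_eq_zero_iff, hB.mul_left_eq_zero, hA.mul_right_eq_zero]

theorem unique_global_minimizer_quadratic_trace {n : ℕ}
    (P12 X12 P22 X22 : Matrix (Fin n) (Fin n) ℝ)
    (hP22 : P22.PosDef) (hX22 : X22.PosDef)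
    (h : Matrix (Fin n) (Fin n) ℝ → ℝ)
    (hh : ∀ H, h H = (P12 * H * X12ᵀ).trace + (P12ᵀ * X12 * Hᵀ).trace
        + (P22 * H * X22 * Hᵀ).trace)
    (Hstar : Matrix (Fin n) (Fin n) ℝ)
    (hHstar : Hstar = -(P22⁻¹ * P12ᵀ * X12 * X22⁻¹)) :
    (∀ H : Matrix (Fin n) (Fin n) ℝ,
        h H - h Hstar = (P22 * (H - Hstar) * X22 * (H - Hstar)ᵀ).trace
        ∧ 0 ≤ h H - h Hstar
        ∧ (h H = h Hstar ↔ H = Hstar)) := by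
  intro H
  have hPu : IsUnit P22.det := (Matrix.isUnit_iff_isUnit_det _).mp hP22.isUnit
  have hXu : IsUnit X22.det := (Matrix.isUnit_iff_isUnit_det _).mp hX22.isUnit
  have hPt : P22ᵀ = P22 := by simpa using hP22.isHermitian.eq
  have hXt : X22ᵀ = X22 := by simpa using hX22.isHermitian.eq
  have stat : P12ᵀ * X12 = -(P22 * Hstar * X22) := by
    rw [hHstar]
    simp only [Matrix.mul_neg, Matrix.neg_mul, neg_neg, Matrix.mul_assoc,
      Matrix.nonsing_inv_mul _ hXu, Matrix.mul_one, Matrix.mul_nonsing_inv_cancel_left _ _ hPu]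
  have lin (K : Matrix (Fin n) (Fin n) ℝ) :
      (P12 * K * X12ᵀ).trace = (P12ᵀ * X12 * Kᵀ).trace := by
    rw [← Matrix.trace_transpose (P12 * K * X12ᵀ)]
    simp only [transpose_mul, transpose_transpose]
    rw [← Matrix.mul_assoc, Matrix.trace_mul_cycle, Matrix.mul_assoc, Matrix.trace_mul_comm,
      Matrix.mul_assoc, Matrix.trace_mul_comm, Matrix.mul_assoc]
  have cross : (P22 * H * X22 * Hstarᵀ).trace = (P22 * Hstar * X22 * Hᵀ).trace := by
    rw [← Matrix.trace_transpose (P22 * H * X22 * Hstarᵀ)]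
    simp only [transpose_mul, transpose_transpose, hPt, hXt]
    rw [← Matrix.mul_assoc, ← Matrix.mul_assoc, Matrix.trace_mul_comm]
    simp only [Matrix.mul_assoc]
  have sq : h H - h Hstar = (P22 * (H - Hstar) * X22 * (H - Hstar)ᵀ).trace := by
    rw [hh, hh, lin, lin, stat]
    simp only [transpose_sub, Matrix.mul_sub, Matrix.sub_mul, Matrix.neg_mul, trace_sub, trace_neg,
      cross]
    ring
  obtain ⟨hnonneg, hzero⟩ := trace_form_nonneg_and_eq_zero_iff hP22 hX22 (H - Hstar)
  exact ⟨sq, sq ▸ hnonneg, by rw [← sub_eq_zero, sq, hzero, sub_eq_zero]⟩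
end

section
/- Let P, X ∈ ℝ^{2n×2n} be symmetric positive definite, partitioned into n×n blocks P = [[P11, P12],[P12^T, P22]] and X = [[X11, X12],[X12^T, X22]]. For invertible T ∈ ℝ^{n×n} set T̄ = [[I_n, 0],[0, T]] and f(T) = Tr(P T̄^{-1} X T̄^{-T}). Suppose T* ∈ ℝ^{n×n} is invertible and satisfies f(T*) ≤ f(T) for every invertible T ∈ ℝ^{n×n}. Then both X12 and P12 are invertible, T* = −X22 X12^{-1} P12^{-T} P22, and T* is the unique invertible matrix attaining the minimum of f over all invertible T. -/
/-!
For invertible `T`, put `S = T⁻¹`. The cost is a quadratic polynomial in `S`,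
`tr (P₁₁ X₁₁) + 2 tr (P₁₂ᵀ X₁₂ Sᵀ) + tr (P₂₂ S X₂₂ Sᵀ)`,
whose gradient is twice `G = P₁₂ᵀ X₁₂ + P₂₂ S X₂₂`. Invertible matrices form an open set, so a
minimizer over it is a critical point: restricting the cost to the line `t ↦ S + t G`
(`gradient_eq_zero`), its derivative at `0` is `2 tr (G Gᵀ)`, hence `G = 0`.
Since `P₂₂` and `X₂₂` are positive definite, hence invertible, `P₁₂ᵀ X₁₂ = - P₂₂ S X₂₂` is
invertible, which forces both factors to be invertible, and the equation can be solved for `T`.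
Every minimizer is thus given by the same formula, which yields uniqueness.
-/

open Matrix

lemma inv_fromBlocks_one {n : ℕ} {T : Matrix (Fin n) (Fin n) ℝ} (hT : IsUnit T.det) :
    (fromBlocks (1 : Matrix (Fin n) (Fin n) ℝ) 0 0 T)⁻¹ = fromBlocks 1 0 0 T⁻¹ := by
  apply Matrix.inv_eq_right_inv
  simp [fromBlocks_multiply, Matrix.mul_nonsing_inv T hT]

lemma trace_blocks {n : ℕ} (A B D E F K S : Matrix (Fin n) (Fin n) ℝ) :
    (fromBlocks A B Bᵀ D * fromBlocks 1 0 0 S * fromBlocks E F Fᵀ K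
      * (fromBlocks 1 0 0 S)ᵀ).trace
      = (A * E).trace + 2 * (Bᵀ * F * Sᵀ).trace + (D * S * K * Sᵀ).trace := by
  have h : (B * S * Fᵀ).trace = (Bᵀ * F * Sᵀ).trace := by
    rw [← Matrix.trace_transpose (B * S * Fᵀ)]
    simp only [transpose_mul, transpose_transpose]
    rw [← Matrix.mul_assoc, Matrix.trace_mul_comm, Matrix.mul_assoc]
  have hdiag : ∀ U V W Z : Matrix (Fin n) (Fin n) ℝ,
      (fromBlocks U V W Z).trace = U.trace + Z.trace := by
    intro U V W Z
    simp [Matrix.trace, Fintype.sum_sum_type]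
  simp only [fromBlocks_multiply, fromBlocks_transpose, hdiag]
  simp only [Matrix.mul_one, Matrix.mul_zero, add_zero, zero_add, transpose_one, transpose_zero,
    Matrix.add_mul, trace_add, h]
  ring

/-- A quadratic polynomial without constant term that is nonnegative near `0` has vanishing
linear coefficient. -/
lemma linear_coeff_eq_zero {a b : ℝ} (h : ∀ᶠ t : ℝ in nhds 0, 0 ≤ t * a + t ^ 2 * b) :
    a = 0 := by
  have hd : HasDerivAt (fun t : ℝ => t * a + t ^ 2 * b) a 0 := by
    have h1 := ((hasDerivAt_id (0 : ℝ)).mul_const a).add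
      (((hasDerivAt_id (0 : ℝ)).pow 2).mul_const b)
    refine (h1.congr_deriv ?_)
    simp
  refine IsLocalMin.hasDerivAt_eq_zero (f := fun t : ℝ => t * a + t ^ 2 * b) ?_ hd
  filter_upwards [h] with t ht
  simpa using ht

/-- Stationarity of the quadratic cost at an invertible minimizer `S`; `D` and `K` only need to be
symmetric, as only the vanishing of the gradient is claimed. -/
lemma gradient_eq_zero {n : ℕ} (C D K S : Matrix (Fin n) (Fin n) ℝ)
    (hD : Dᵀ = D) (hK : Kᵀ = K) (hS : IsUnit S.det)
    (hmin : ∀ R : Matrix (Fin n) (Fin n) ℝ, IsUnit R.det →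
      2 * (C * Sᵀ).trace + (D * S * K * Sᵀ).trace
        ≤ 2 * (C * Rᵀ).trace + (D * R * K * Rᵀ).trace) :
    C + D * S * K = 0 := by
  set G := C + D * S * K with hG
  have hsym : (D * G * K * Sᵀ).trace = (D * S * K * Gᵀ).trace := by
    rw [← Matrix.trace_transpose (D * G * K * Sᵀ)]
    simp only [transpose_mul, transpose_transpose, hD, hK]
    rw [← Matrix.mul_assoc, ← Matrix.mul_assoc, Matrix.trace_mul_comm]
    simp only [Matrix.mul_assoc]
  have hGG : (G * Gᵀ).trace = (C * Gᵀ).trace + (D * S * K * Gᵀ).trace := by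
    conv_lhs => rw [hG, Matrix.add_mul, trace_add]
  have hline : ∀ t : ℝ, 2 * (C * (S + t • G)ᵀ).trace + (D * (S + t • G) * K * (S + t • G)ᵀ).trace
      = 2 * (C * Sᵀ).trace + (D * S * K * Sᵀ).trace
        + (t * (2 * (G * Gᵀ).trace) + t ^ 2 * (D * G * K * Gᵀ).trace) := by
    intro t
    simp only [transpose_add, transpose_smul, Matrix.mul_add, Matrix.add_mul, Matrix.mul_smul,
      Matrix.smul_mul, trace_add, trace_smul, smul_eq_mul, smul_add]
    rw [hsym, hGG]
    ring
  have hopen : ∀ᶠ t : ℝ in nhds 0, (S + t • G).det ≠ 0 := by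
    have hc : Continuous fun t : ℝ => (S + t • G).det := by fun_prop
    apply hc.continuousAt.eventually_ne
    simpa using hS.ne_zero
  have ha : 2 * (G * Gᵀ).trace = 0 := by
    refine linear_coeff_eq_zero (b := (D * G * K * Gᵀ).trace) ?_
    filter_upwards [hopen] with t ht
    have := hmin _ (isUnit_iff_ne_zero.mpr ht)
    rw [hline t] at this
    linarith
  have h0 : (G * Gᴴ).trace = 0 := by
    rw [conjTranspose_eq_transpose_of_trivial]; linarith
  exact Matrix.trace_mul_conjTranspose_self_eq_zero_iff.mp h0

/-- Solving the stationarity equation for `T`. -/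
lemma solve_gradient {n : ℕ} {B F D K T : Matrix (Fin n) (Fin n) ℝ}
    (hD : IsUnit D.det) (hK : IsUnit K.det) (hT : IsUnit T.det)
    (h : Bᵀ * F + D * T⁻¹ * K = 0) :
    IsUnit F.det ∧ IsUnit B.det ∧ T = -(K * F⁻¹ * (Bᵀ)⁻¹ * D) := by
  have h1 : Bᵀ * F = -(D * T⁻¹ * K) := eq_neg_of_add_eq_zero_left h
  have hu : IsUnit (Bᵀ * F).det := by
    rw [h1, ← Matrix.isUnit_iff_isUnit_det]
    rw [← Matrix.isUnit_iff_isUnit_det] at hD hK hT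
    exact ((hD.mul (by simpa using hT)).mul hK).neg
  rw [det_mul, det_transpose, IsUnit.mul_iff] at hu
  refine ⟨hu.2, hu.1, ?_⟩
  have h2 : F⁻¹ * (Bᵀ)⁻¹ = -(K⁻¹ * T * D⁻¹) := by
    rw [← Matrix.mul_inv_rev, h1]
    apply Matrix.inv_eq_right_inv
    rw [neg_mul_neg]
    calc D * T⁻¹ * K * (K⁻¹ * T * D⁻¹) = D * (T⁻¹ * ((K * K⁻¹) * T)) * D⁻¹ := by
          simp only [Matrix.mul_assoc]
      _ = 1 := by
          rw [mul_nonsing_inv K hK, Matrix.one_mul, nonsing_inv_mul T hT, Matrix.mul_one,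
            mul_nonsing_inv D hD]
  calc T = (K * K⁻¹) * T * (D⁻¹ * D) := by
        rw [mul_nonsing_inv K hK, nonsing_inv_mul D hD, Matrix.one_mul, Matrix.mul_one]
    _ = -(K * (-(K⁻¹ * T * D⁻¹)) * D) := by
        simp only [Matrix.mul_neg, Matrix.neg_mul, neg_neg, Matrix.mul_assoc]
    _ = _ := by rw [← h2]; simp only [Matrix.mul_assoc]

theorem optimal_similarity_transformation {n : ℕ}
    (P X : Matrix (Fin n ⊕ Fin n) (Fin n ⊕ Fin n) ℝ)
    (hP : P.PosDef) (hX : X.PosDef)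
    (f : Matrix (Fin n) (Fin n) ℝ → ℝ)
    (hf : ∀ T : Matrix (Fin n) (Fin n) ℝ,
        f T = (P * (fromBlocks 1 0 0 T)⁻¹ * X * ((fromBlocks 1 0 0 T)⁻¹)ᵀ).trace)
    (Tstar : Matrix (Fin n) (Fin n) ℝ) (hTstar : IsUnit Tstar.det)
    (hmin : ∀ T : Matrix (Fin n) (Fin n) ℝ, IsUnit T.det → f Tstar ≤ f T) :
    IsUnit X.toBlocks₁₂.det
    ∧ IsUnit P.toBlocks₁₂.det
    ∧ Tstar = -(X.toBlocks₂₂ * X.toBlocks₁₂⁻¹ * (P.toBlocks₁₂ᵀ)⁻¹ * P.toBlocks₂₂)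
    ∧ ∀ T' : Matrix (Fin n) (Fin n) ℝ, IsUnit T'.det →
        (∀ T : Matrix (Fin n) (Fin n) ℝ, IsUnit T.det → f T' ≤ f T) → T' = Tstar := by
  have hblk : ∀ M : Matrix (Fin n ⊕ Fin n) (Fin n ⊕ Fin n) ℝ, M.PosDef →
      M = fromBlocks M.toBlocks₁₁ M.toBlocks₁₂ M.toBlocks₁₂ᵀ M.toBlocks₂₂ ∧
      M.toBlocks₂₂.PosDef ∧ M.toBlocks₂₂ᵀ = M.toBlocks₂₂ := by
    intro M hM
    have h22 : M.toBlocks₂₂.PosDef := hM.submatrix Sum.inr_injective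
    refine ⟨?_, h22, by simpa using h22.isHermitian.eq⟩
    have h21 : M.toBlocks₁₂ᵀ = M.toBlocks₂₁ := by
      ext i j
      simpa [toBlocks₁₂, toBlocks₂₁] using hM.isHermitian.apply (Sum.inr i) (Sum.inl j)
    rw [h21, fromBlocks_toBlocks]
  obtain ⟨hPb, hP22, hPs⟩ := hblk P hP
  obtain ⟨hXb, hX22, hXs⟩ := hblk X hX
  have hfS : ∀ T : Matrix (Fin n) (Fin n) ℝ, IsUnit T.det →
      f T = (P.toBlocks₁₁ * X.toBlocks₁₁).trace + 2 * (P.toBlocks₁₂ᵀ * X.toBlocks₁₂ * T⁻¹ᵀ).trace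
        + (P.toBlocks₂₂ * T⁻¹ * X.toBlocks₂₂ * T⁻¹ᵀ).trace := by
    intro T hT
    rw [hf, inv_fromBlocks_one hT, ← trace_blocks, ← hPb, ← hXb]
  have key : ∀ T : Matrix (Fin n) (Fin n) ℝ, IsUnit T.det →
      (∀ R : Matrix (Fin n) (Fin n) ℝ, IsUnit R.det → f T ≤ f R) →
      IsUnit X.toBlocks₁₂.det ∧ IsUnit P.toBlocks₁₂.det ∧
        T = -(X.toBlocks₂₂ * X.toBlocks₁₂⁻¹ * (P.toBlocks₁₂ᵀ)⁻¹ * P.toBlocks₂₂) := by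
    intro T hT hm
    refine solve_gradient hP22.det_pos.ne'.isUnit hX22.det_pos.ne'.isUnit hT ?_
    refine gradient_eq_zero _ _ _ _ hPs hXs (isUnit_nonsing_inv_det T hT) fun R hR => ?_
    have h := hm R⁻¹ (isUnit_nonsing_inv_det R hR)
    rw [hfS T hT, hfS _ (isUnit_nonsing_inv_det R hR), nonsing_inv_nonsing_inv R hR] at h
    linarith
  obtain ⟨h1, h2, h3⟩ := key Tstar hTstar hmin
  exact ⟨h1, h2, h3, fun T' hT' hm => (key T' hT' hm).2.2.trans h3.symm⟩
end

section
/- Assume Q ∈ ℝ^{n×n} is symmetric positive semidefinite, R ∈ ℝ^{m×m} is symmetric positive definite, the pair (C_K, A_K) is observable (Hautus test), and for every λ ∈ ℂ and every nonzero v ∈ ℂ^n with A v = λ v one has Q v ≠ 0 (i.e., (Q^{1/2}, A) is observable). Suppose the closed-loop matrix Acl(K) is Schur stable, and P ∈ ℝ^{2n×2n} is symmetric positive semidefinite and satisfies the Lyapunov equation P = Qcl(K) + Acl(K)^T P Acl(K). Then P is positive definite. -/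
/-! The kernel of `P` is invariant under the closed-loop matrix and is annihilated by the closed-loop
weight: for a real `v` with `P v = 0`, the Lyapunov equation reads
`0 = vᵀ Qcl v + (Acl v)ᵀ P (Acl v)`, a sum of nonnegative terms, so `Q v₁ = 0`, `C_K v₂ = 0` and
`P (Acl v) = 0` (`kernel_step`). Since all matrices are real, the same holds for the kernel of `P`
over `ℂ`. If `P` were singular, this complex kernel would contain an eigenvector `(x, z)` of `Acl`.
From `C_K z = 0` one gets `A x = μ x` with `Q x = 0`, so `x = 0`; then `A_K z = μ z` with
`C_K z = 0`, so `z = 0`, a contradiction. -/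

open Matrix

/-- A real square matrix is Schur stable if all of its (complex) eigenvalues lie
strictly inside the unit circle. -/
def SchurStable {k : Type*} [Fintype k] (M : Matrix k k ℝ) : Prop :=
  ∀ (μ : ℂ) (v : k → ℂ), v ≠ 0 → M.map (fun x => (x : ℂ)) *ᵥ v = μ • v → ‖μ‖ < 1

/-- Hautus observability test for a pair of real matrices. -/
def Observable {p k : Type*} [Fintype k] (Cm : Matrix p k ℝ) (Am : Matrix k k ℝ) : Prop :=
  ∀ (μ : ℂ) (v : k → ℂ), v ≠ 0 → Am.map (fun x => (x : ℂ)) *ᵥ v = μ • v →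
    Cm.map (fun x => (x : ℂ)) *ᵥ v ≠ 0

/-- Closed-loop matrix. -/
def Acl {n m d : ℕ} (A : Matrix (Fin n) (Fin n) ℝ) (B : Matrix (Fin n) (Fin m) ℝ)
    (C : Matrix (Fin d) (Fin n) ℝ) (AK : Matrix (Fin n) (Fin n) ℝ)
    (BK : Matrix (Fin n) (Fin d) ℝ) (CK : Matrix (Fin m) (Fin n) ℝ) :
    Matrix (Fin n ⊕ Fin n) (Fin n ⊕ Fin n) ℝ :=
  fromBlocks A (B * CK) (BK * C) AK

/-- Closed-loop weight matrix. -/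
def Qcl {n m : ℕ} (Q : Matrix (Fin n) (Fin n) ℝ) (R : Matrix (Fin m) (Fin m) ℝ)
    (CK : Matrix (Fin m) (Fin n) ℝ) : Matrix (Fin n ⊕ Fin n) (Fin n ⊕ Fin n) ℝ :=
  fromBlocks Q 0 0 (CKᵀ * R * CK)

lemma map_ofReal_mulVec_apply {p k : Type*} [Fintype k] (M : Matrix p k ℝ) (v : k → ℂ) (i : p) :
    (M.map (fun x => (x : ℂ)) *ᵥ v) i
      = ⟨(M *ᵥ fun j => (v j).re) i, (M *ᵥ fun j => (v j).im) i⟩ := by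
  apply Complex.ext <;> simp [mulVec, dotProduct]

lemma map_ofReal_mulVec_eq_zero_iff {p k : Type*} [Fintype k] (M : Matrix p k ℝ) (v : k → ℂ) :
    M.map (fun x => (x : ℂ)) *ᵥ v = 0 ↔
      M *ᵥ (fun j => (v j).re) = 0 ∧ M *ᵥ (fun j => (v j).im) = 0 := by
  simp only [funext_iff, map_ofReal_mulVec_apply, Pi.zero_apply, Complex.ext_iff,
    Complex.zero_re, Complex.zero_im, forall_and]

/-- A real vector in the kernel of a Lyapunov solution stays there under the closed-loop matrix and
is not seen by either block of the closed-loop weight. -/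
lemma kernel_step {n m : ℕ} {Q : Matrix (Fin n) (Fin n) ℝ} {R : Matrix (Fin m) (Fin m) ℝ}
    (hQ : Q.PosSemidef) (hR : R.PosDef) {CK : Matrix (Fin m) (Fin n) ℝ}
    {P M : Matrix (Fin n ⊕ Fin n) (Fin n ⊕ Fin n) ℝ} (hPsd : P.PosSemidef)
    (hLyap : P = Qcl Q R CK + Mᵀ * P * M) (v : Fin n ⊕ Fin n → ℝ) (hv : P *ᵥ v = 0) :
    P *ᵥ (M *ᵥ v) = 0 ∧ Q *ᵥ (v ∘ Sum.inl) = 0 ∧ CK *ᵥ (v ∘ Sum.inr) = 0 := by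
  -- The equation tested against `v`: three nonnegative terms sum to zero.
  have h0 : v ⬝ᵥ (P *ᵥ v) = 0 := by simp [hv]
  have h1 : v ⬝ᵥ ((Mᵀ * P * M) *ᵥ v) = (M *ᵥ v) ⬝ᵥ (P *ᵥ (M *ᵥ v)) := by
    rw [← mulVec_mulVec, ← mulVec_mulVec, dotProduct_mulVec, vecMul_transpose]
  have h2 : v ⬝ᵥ (Qcl Q R CK *ᵥ v) = (v ∘ Sum.inl) ⬝ᵥ (Q *ᵥ (v ∘ Sum.inl))
      + (CK *ᵥ (v ∘ Sum.inr)) ⬝ᵥ (R *ᵥ (CK *ᵥ (v ∘ Sum.inr))) := by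
    rw [← Sum.elim_comp_inl_inr v, Qcl, fromBlocks_mulVec, sumElim_dotProduct_sumElim]
    simp only [Sum.elim_comp_inl, Sum.elim_comp_inr, zero_mulVec, add_zero, zero_add]
    rw [← mulVec_mulVec, ← mulVec_mulVec, dotProduct_mulVec _ CKᵀ, vecMul_transpose]
  have a := hPsd.dotProduct_mulVec_nonneg (M *ᵥ v)
  have b := hQ.dotProduct_mulVec_nonneg (v ∘ Sum.inl)
  have c := hR.posSemidef.dotProduct_mulVec_nonneg (CK *ᵥ (v ∘ Sum.inr))
  simp only [star_trivial] at a b c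
  rw [hLyap, add_mulVec, dotProduct_add, h1, h2] at h0
  refine ⟨(hPsd.dotProduct_mulVec_zero_iff _).1 ?_, (hQ.dotProduct_mulVec_zero_iff _).1 ?_, ?_⟩
  · rw [star_trivial]; linarith
  · rw [star_trivial]; linarith
  · by_contra hne
    have := hR.dotProduct_mulVec_pos hne
    rw [star_trivial] at this
    linarith

theorem lyapunov_solution_posdef_of_observable {n m d : ℕ}
    (A : Matrix (Fin n) (Fin n) ℝ) (B : Matrix (Fin n) (Fin m) ℝ)
    (C : Matrix (Fin d) (Fin n) ℝ)
    (Q : Matrix (Fin n) (Fin n) ℝ) (R : Matrix (Fin m) (Fin m) ℝ)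
    (hQ : Q.PosSemidef) (hR : R.PosDef)
    (AK : Matrix (Fin n) (Fin n) ℝ) (BK : Matrix (Fin n) (Fin d) ℝ)
    (CK : Matrix (Fin m) (Fin n) ℝ)
    (hobsK : Observable CK AK)
    (hobsQ : ∀ (μ : ℂ) (v : Fin n → ℂ), v ≠ 0 →
        A.map (fun x => (x : ℂ)) *ᵥ v = μ • v → Q.map (fun x => (x : ℂ)) *ᵥ v ≠ 0)
    (hstable : SchurStable (Acl A B C AK BK CK))
    (P : Matrix (Fin n ⊕ Fin n) (Fin n ⊕ Fin n) ℝ)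
    (hPsd : P.PosSemidef)
    (hLyap : P = Qcl Q R CK + (Acl A B C AK BK CK)ᵀ * P * Acl A B C AK BK CK) :
    P.PosDef := by
  rw [hPsd.posDef_iff_isUnit, isUnit_iff_isUnit_det, isUnit_iff_ne_zero]
  intro hdet
  obtain ⟨w, hw0, hw⟩ := exists_mulVec_eq_zero_iff.2 hdet
  set M := Acl A B C AK BK CK with hM
  have step : ∀ v : Fin n ⊕ Fin n → ℂ, P.map (fun x => (x : ℂ)) *ᵥ v = 0 →
      P.map (fun x => (x : ℂ)) *ᵥ (M.map (fun x => (x : ℂ)) *ᵥ v) = 0 ∧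
      Q.map (fun x => (x : ℂ)) *ᵥ (v ∘ Sum.inl) = 0 ∧
      CK.map (fun x => (x : ℂ)) *ᵥ (v ∘ Sum.inr) = 0 := by
    intro v hv
    simp only [map_ofReal_mulVec_eq_zero_iff] at hv ⊢
    obtain ⟨r1, r2, r3⟩ := kernel_step hQ hR hPsd hLyap _ hv.1
    obtain ⟨i1, i2, i3⟩ := kernel_step hQ hR hPsd hLyap _ hv.2
    simp only [map_ofReal_mulVec_apply]
    exact ⟨⟨r1, i1⟩, ⟨r2, i2⟩, ⟨r3, i3⟩⟩
  let W := LinearMap.ker (P.map (fun x => (x : ℂ))).mulVecLin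
  have hinv : ∀ v ∈ W, (M.map (fun x => (x : ℂ))).mulVecLin v ∈ W := fun v hv => (step v hv).1
  have hWw : (fun j => (w j : ℂ)) ∈ W := by
    change P.map (fun x => (x : ℂ)) *ᵥ _ = 0
    rw [map_ofReal_mulVec_eq_zero_iff]
    refine ⟨by simpa using hw, ?_⟩
    simp only [Complex.ofReal_im]
    exact mulVec_zero P
  have : Nontrivial W := by
    refine ⟨⟨⟨_, hWw⟩, 0, fun h => hw0 ?_⟩⟩
    funext j
    simpa using congrFun (congrArg Subtype.val h) j
  obtain ⟨μ, hμ⟩ := Module.End.exists_eigenvalue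
    ((M.map (fun x => (x : ℂ))).mulVecLin.restrict hinv)
  obtain ⟨⟨v, hvW⟩, hv⟩ := hμ.exists_hasEigenvector
  have hv0 : v ≠ 0 := fun h => hv.2 (Subtype.ext h)
  have hMv : M.map (fun x => (x : ℂ)) *ᵥ v = μ • v := congrArg Subtype.val hv.apply_eq_smul
  obtain ⟨-, hQx, hCz⟩ := step v hvW
  have hmul : ∀ {p q r : ℕ} (S : Matrix (Fin p) (Fin q) ℝ) (T : Matrix (Fin q) (Fin r) ℝ),
      (S * T).map (fun x => (x : ℂ)) = S.map (fun x => (x : ℂ)) * T.map (fun x => (x : ℂ)) :=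
    fun S T => Matrix.map_mul (f := Complex.ofRealHom)
  rw [hM, Acl, fromBlocks_map, fromBlocks_mulVec, hmul, hmul, ← mulVec_mulVec, hCz,
    mulVec_zero, add_zero] at hMv
  have hx : v ∘ Sum.inl = 0 := by
    by_contra hne
    exact hobsQ μ _ hne (funext fun i => congrFun hMv (Sum.inl i)) hQx
  rw [hx, mulVec_zero, mulVec_zero, zero_add] at hMv
  have hz : v ∘ Sum.inr = 0 := by
    by_contra hne
    exact hobsK μ _ hne (funext fun i => congrFun hMv (Sum.inr i)) hCz
  apply hv0
  rw [← Sum.elim_comp_inl_inr v, hx, hz]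
  exact Sum.elim_zero_zero
end

section
/- Let A ∈ ℝ^{n×n} and C ∈ ℝ^{d×n} with C of full row rank d, and let Δ ∈ ℝ^{n×n} be symmetric positive definite. Assume there exists L0 ∈ ℝ^{n×d} such that A − L0 C is Schur stable. Then there exists a unique symmetric positive definite Σ̂ ∈ ℝ^{n×n} satisfying the algebraic Riccati equation Σ̂ = Δ + A Σ̂ A^T − A Σ̂ C^T (C Σ̂ C^T)^{-1} C Σ̂ A^T (note C Σ̂ C^T is invertible since Σ̂ is positive definite and C has full row rank); moreover, A − L* C is Schur stable, where L* = A Σ̂ C^T (C Σ̂ C^T)^{-1}. -/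
/-!
Write `F L S = Δ + (A - L C) S (A - L C)ᵀ` and let `R S` be the right-hand side of the Riccati
equation. Completing the square (`closedLoopMap_eq`) gives
`F L S = R S + (L - K) (C S Cᵀ) (L - K)ᵀ` with `K = A S Cᵀ (C S Cᵀ)⁻¹`, so `R S` is the minimum of
`F L S` over `L` in the Loewner order, attained at `L = K`. Consequently `R` is monotone and
`Δ ≤ R S`.

Existence (`exists_riccati_fixedPoint`): the iterates `R^j Δ` increase. Since `A - L0 C` is Schur
stable, Gelfand's formula makes `P = ∑ j, (A - L0 C)^j Δ ((A - L0 C)^j)ᵀ` converge; it satisfies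
`P = F L0 P`, and it bounds all the iterates. A bounded monotone sequence of symmetric matrices
converges, and continuity of `R` makes the limit, which is at least `Δ`, a fixed point.

Stability (`schurStable_of_lyapunov`): a fixed point `S` satisfies `S = Δ + M S Mᵀ` with
`M = A - K C`, and testing this on a left eigenvector of `M` forces the eigenvalue into the open
unit disc.

Uniqueness (`riccati_fixedPoint_le`): for fixed points `S`, `T` and the closed loop `M` of `T`,
minimality gives `S - T ≤ M (S - T) Mᵀ`. Iterating, with `M` Schur stable, yields `S ≤ T`, and
the roles can be exchanged.
-/

open Matrix

open Filter Topology
open scoped MatrixOrder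

/-! ### Powers of Schur stable matrices -/

section PowerBound

attribute [local instance] Matrix.frobeniusNormedRing Matrix.frobeniusNormedAlgebra

theorem SchurStable.spectralRadius_lt_one {k : Type*} [Fintype k] [DecidableEq k]
    {M : Matrix k k ℝ} (hM : SchurStable M) :
    spectralRadius ℂ (M.map (fun x => (x : ℂ))) < 1 := by
  -- For empty `k` the spectrum is empty, so the nonemptiness used below is unavailable.
  rcases subsingleton_or_nontrivial (Matrix k k ℂ) with h | h
  · rw [spectrum.SpectralRadius.of_subsingleton]
    exact zero_lt_one
  · have := spectrum.spectralRadius_lt_of_forall_lt (M.map (fun x => (x : ℂ))) (r := 1) ?_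
    · simpa using this
    intro μ hμ
    rw [spectrum.mem_iff, Matrix.isUnit_iff_isUnit_det, isUnit_iff_ne_zero, not_not] at hμ
    obtain ⟨v, hv, hv'⟩ := Matrix.exists_mulVec_eq_zero_iff.mpr hμ
    have := hM μ v hv (by
      rw [Matrix.sub_mulVec, sub_eq_zero, Algebra.algebraMap_eq_smul_one, Matrix.smul_mulVec,
        Matrix.one_mulVec] at hv'
      exact hv'.symm)
    exact_mod_cast this

/-- Gelfand's formula for the complexification of `M`. The Frobenius norm is used because it is
submultiplicative, unchanged by complexification, and invariant under transposition. -/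
theorem SchurStable.exists_pow_bound {k : Type*} [Fintype k] [DecidableEq k]
    {M : Matrix k k ℝ} (hM : SchurStable M) :
    ∃ r : ℝ, 0 ≤ r ∧ r < 1 ∧ ∀ᶠ j : ℕ in atTop, ‖M ^ j‖ ≤ r ^ j := by
  obtain ⟨r, hr, hr1⟩ := ENNReal.lt_iff_exists_nnreal_btwn.mp hM.spectralRadius_lt_one
  refine ⟨r, r.2, by exact_mod_cast hr1, ?_⟩
  have hG := spectrum.pow_nnnorm_pow_one_div_tendsto_nhds_spectralRadius
    (M.map (fun x => (x : ℂ)))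
  filter_upwards [hG.eventually_lt_const hr, eventually_gt_atTop 0] with j hj hj0
  have hmap : ‖(M.map (fun x => (x : ℂ))) ^ j‖ = ‖M ^ j‖ := by
    rw [show (M.map (fun x => (x : ℂ))) ^ j = (M ^ j).map (fun x => (x : ℂ)) from
      (Matrix.map_pow M Complex.ofRealHom j).symm]
    exact Matrix.frobenius_norm_map_eq _ _ fun a => by simp
  have h1 := ENNReal.rpow_lt_rpow hj (z := (j : ℝ)) (by exact_mod_cast hj0)
  rw [← ENNReal.rpow_mul, one_div, inv_mul_cancel₀ (by positivity), ENNReal.rpow_one,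
    ENNReal.rpow_natCast] at h1
  rw [← hmap]
  exact_mod_cast h1.le

/-- The series solving the Lyapunov equation `P = Q + M P Mᵀ` converges. Summability refers to
the entrywise topology, which the Frobenius norm induces. -/
theorem SchurStable.summable_conj {k : Type*} [Fintype k] [DecidableEq k]
    {M : Matrix k k ℝ} (hM : SchurStable M) (Q : Matrix k k ℝ) :
    Summable fun j : ℕ => M ^ j * Q * (M ^ j)ᵀ := by
  obtain ⟨r, hr0, hr1, hr⟩ := hM.exists_pow_bound
  have hs : Summable fun j : ℕ => ‖Q‖ * (r * r) ^ j :=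
    (summable_geometric_of_lt_one (by positivity) (by nlinarith)).mul_left _
  have : CompleteSpace (Matrix k k ℝ) := FiniteDimensional.complete ℝ _
  refine Summable.of_norm_bounded_eventually_nat hs ?_
  filter_upwards [hr] with j hj
  calc ‖M ^ j * Q * (M ^ j)ᵀ‖ ≤ ‖M ^ j‖ * ‖Q‖ * ‖M ^ j‖ := by
        refine (norm_mul_le _ _).trans ?_
        rw [Matrix.frobenius_norm_transpose]
        gcongr
        exact norm_mul_le _ _
    _ ≤ r ^ j * ‖Q‖ * r ^ j := by gcongr
    _ = ‖Q‖ * (r * r) ^ j := by rw [mul_pow]; ring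

end PowerBound


/-! ### The Loewner order -/

theorem quad_le_of_le {k : Type*} [Fintype k] {X Y : Matrix k k ℝ} (h : X ≤ Y) (x : k → ℝ) :
    x ⬝ᵥ X *ᵥ x ≤ x ⬝ᵥ Y *ᵥ x := by
  have := (Matrix.le_iff.mp h).dotProduct_mulVec_nonneg x
  rw [star_trivial, Matrix.sub_mulVec, dotProduct_sub] at this
  linarith

/-- The cone of positive semidefinite matrices is closed. -/
theorem nonneg_of_tendsto {k : Type*} [Fintype k] {f : ℕ → Matrix k k ℝ} {P : Matrix k k ℝ}
    (hf : Tendsto f atTop (𝓝 P)) (h : ∀ j, 0 ≤ f j) : 0 ≤ P := by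
  rw [Matrix.nonneg_iff_posSemidef]
  refine Matrix.PosSemidef.of_dotProduct_mulVec_nonneg ?_ fun x => ?_
  · have h1 : Tendsto (fun j => (f j)ᴴ) atTop (𝓝 Pᴴ) :=
      (continuous_id.matrix_conjTranspose.tendsto P).comp hf
    have h2 : (fun j => (f j)ᴴ) = f := funext fun j =>
      (Matrix.nonneg_iff_posSemidef.mp (h j)).isHermitian
    rw [h2] at h1
    exact tendsto_nhds_unique h1 hf
  · have hc : Continuous fun X : Matrix k k ℝ => star x ⬝ᵥ X *ᵥ x := by fun_prop
    exact ge_of_tendsto' ((hc.tendsto P).comp hf) fun j =>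
      (Matrix.nonneg_iff_posSemidef.mp (h j)).dotProduct_mulVec_nonneg x

/-- A bounded monotone sequence of symmetric matrices converges: each quadratic form
`x ⬝ᵥ f j *ᵥ x` does, and polarization recovers the entries. -/
theorem exists_tendsto_of_monotone {k : Type*} [Fintype k] {f : ℕ → Matrix k k ℝ}
    {P : Matrix k k ℝ} (hs : ∀ j, (f j).IsHermitian) (hf : Monotone f) (hP : ∀ j, f j ≤ P) :
    ∃ X, Tendsto f atTop (𝓝 X) := by
  classical
  have hq : ∀ x : k → ℝ, ∃ l, Tendsto (fun j => x ⬝ᵥ f j *ᵥ x) atTop (𝓝 l) := fun x =>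
    ⟨_, tendsto_atTop_ciSup (fun i j hij => quad_le_of_le (hf hij) x)
      ⟨_, Set.forall_mem_range.mpr fun j => quad_le_of_le (hP j) x⟩⟩
  choose q hq using hq
  let e : k → k → ℝ := fun a => Pi.single a 1
  refine ⟨fun a b => (q (e a + e b) - q (e a) - q (e b)) / 2, ?_⟩
  refine tendsto_pi_nhds.mpr fun a => tendsto_pi_nhds.mpr fun b => ?_
  refine ((((hq (e a + e b)).sub (hq (e a))).sub (hq (e b))).div_const 2).congr fun j => ?_
  have hab : f j b a = f j a b := (hs j).apply a b
  simp only [e, Matrix.mulVec_add, dotProduct_add, add_dotProduct, Matrix.mulVec_single_one,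
    single_one_dotProduct, Matrix.col_apply]
  rw [hab]
  ring

theorem conj_le_conj {k l : Type*} [Fintype k] [Fintype l] {X Y : Matrix k k ℝ} (h : X ≤ Y)
    (M : Matrix l k ℝ) : M * X * Mᵀ ≤ M * Y * Mᵀ := by
  have := (Matrix.le_iff.mp h).mul_mul_conjTranspose_same M
  rwa [Matrix.mul_sub, Matrix.sub_mul, Matrix.conjTranspose_eq_transpose_of_trivial] at this

/-! ### Lyapunov equations and inequalities -/

/-- The solution is `P = ∑ j, M ^ j * Q * (M ^ j)ᵀ`. -/
theorem SchurStable.exists_lyapunov {k : Type*} [Fintype k] [DecidableEq k]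
    {M Q : Matrix k k ℝ} (hM : SchurStable M) (hQ : 0 ≤ Q) :
    ∃ P, Q ≤ P ∧ P = Q + M * P * Mᵀ := by
  have hs := hM.summable_conj Q
  have hterm : ∀ j, 0 ≤ M ^ j * Q * (M ^ j)ᵀ := fun j => by
    simpa using conj_le_conj hQ (M ^ j)
  have hP : 0 ≤ ∑' j, M ^ j * Q * (M ^ j)ᵀ :=
    nonneg_of_tendsto hs.hasSum.tendsto_sum_nat fun j => Finset.sum_nonneg fun i _ => hterm i
  have heq : ∑' j, M ^ j * Q * (M ^ j)ᵀ = Q + M * (∑' j, M ^ j * Q * (M ^ j)ᵀ) * Mᵀ := by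
    conv_lhs => rw [hs.tsum_eq_zero_add]
    rw [← hs.tsum_mul_left, ← (hs.mul_left M).tsum_mul_right]
    simp [pow_succ', Matrix.mul_assoc]
  refine ⟨_, ?_, heq⟩
  rw [heq]
  simpa using conj_le_conj hP M

/-- Iterating the hypothesis gives `D ≤ M ^ j * D * (M ^ j)ᵀ`, whose right side tends to `0`. -/
theorem SchurStable.nonpos_of_le_conj {k : Type*} [Fintype k] [DecidableEq k]
    {M D : Matrix k k ℝ} (hM : SchurStable M) (hD : D ≤ M * D * Mᵀ) : D ≤ 0 := by
  have hiter : ∀ j : ℕ, D ≤ M ^ j * D * (M ^ j)ᵀ := by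
    intro j
    induction j with
    | zero => simp
    | succ j ih =>
      refine hD.trans ?_
      have := conj_le_conj ih M
      rwa [show M * (M ^ j * D * (M ^ j)ᵀ) * Mᵀ = M ^ (j + 1) * D * (M ^ (j + 1))ᵀ by
        simp [pow_succ', Matrix.mul_assoc]] at this
  have hlim := (hM.summable_conj D).tendsto_atTop_zero.sub_const D
  have := nonneg_of_tendsto hlim fun j => sub_nonneg.mpr (hiter j)
  simpa using this

/-- Lyapunov's criterion. If `w` is a left eigenvector of `M` for `μ`, pairing the equation with
`w` gives `w* S w = w* Q w + |μ|² w* S w` with `w* Q w > 0`, hence `|μ| < 1`. The Hermitian form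
of a real symmetric matrix at `w = x + i y` is written as the sum of its values at `x` and `y`. -/
theorem schurStable_of_lyapunov {k : Type*} [Fintype k] [DecidableEq k]
    {M S Q : Matrix k k ℝ} (hQ : Q.PosDef) (hS : 0 ≤ S) (h : S = Q + M * S * Mᵀ) :
    SchurStable M := by
  intro μ v hv hv'
  obtain ⟨w, hw, hw'⟩ : ∃ w : k → ℂ, w ≠ 0 ∧ w ᵥ* M.map (fun x => (x : ℂ)) = μ • w := by
    have hdet : (M.map (fun x => (x : ℂ)) - μ • (1 : Matrix k k ℂ)).det = 0 :=
      Matrix.exists_mulVec_eq_zero_iff.mp ⟨v, hv, by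
        rw [Matrix.sub_mulVec, hv', Matrix.smul_mulVec, Matrix.one_mulVec, sub_self]⟩
    obtain ⟨w, hw, hw'⟩ := Matrix.exists_vecMul_eq_zero_iff.mpr hdet
    refine ⟨w, hw, ?_⟩
    rwa [Matrix.vecMul_sub, Matrix.vecMul_smul, Matrix.vecMul_one, sub_eq_zero] at hw'
  let x : k → ℝ := fun i => (w i).re
  let y : k → ℝ := fun i => (w i).im
  have hx : Mᵀ *ᵥ x = μ.re • x - μ.im • y := by
    ext i
    have := congrArg Complex.re (congrFun hw' i)
    simpa [Matrix.mulVec_transpose, Matrix.vecMul, dotProduct, x, y] using this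
  have hy : Mᵀ *ᵥ y = μ.re • y + μ.im • x := by
    ext i
    have := congrArg Complex.im (congrFun hw' i)
    simpa [Matrix.mulVec_transpose, Matrix.vecMul, dotProduct, x, y] using this
  have hxy : x ≠ 0 ∨ y ≠ 0 := by
    by_contra! hc
    refine hw (funext fun i => Complex.ext ?_ ?_)
    · exact congrFun hc.1 i
    · exact congrFun hc.2 i
  have hq : ∀ z : k → ℝ, z ⬝ᵥ S *ᵥ z = z ⬝ᵥ Q *ᵥ z + (Mᵀ *ᵥ z) ⬝ᵥ S *ᵥ (Mᵀ *ᵥ z) := by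
    intro z
    conv_lhs => rw [h]
    rw [Matrix.add_mulVec, dotProduct_add, ← Matrix.mulVec_mulVec, ← Matrix.mulVec_mulVec,
      Matrix.dotProduct_mulVec z M, Matrix.mulVec_transpose M z]
  have hSs : Sᵀ = S := by
    simpa using (Matrix.nonneg_iff_posSemidef.mp hS).isHermitian.eq
  have hcomm : y ⬝ᵥ S *ᵥ x = x ⬝ᵥ S *ᵥ y := by
    rw [Matrix.dotProduct_mulVec, ← Matrix.mulVec_transpose, hSs, dotProduct_comm]
  have hqx := hq x
  have hqy := hq y
  rw [hx] at hqx
  rw [hy] at hqy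
  simp only [Matrix.mulVec_add, Matrix.mulVec_sub, Matrix.mulVec_smul, dotProduct_add,
    dotProduct_sub, add_dotProduct, sub_dotProduct, dotProduct_smul, smul_dotProduct,
    smul_eq_mul, hcomm] at hqx hqy
  have hQn : ∀ z : k → ℝ, 0 ≤ z ⬝ᵥ Q *ᵥ z := fun z => by
    simpa using hQ.posSemidef.dotProduct_mulVec_nonneg z
  have hSn : ∀ z : k → ℝ, 0 ≤ z ⬝ᵥ S *ᵥ z := fun z => by
    simpa using (Matrix.nonneg_iff_posSemidef.mp hS).dotProduct_mulVec_nonneg z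
  have hQp : 0 < x ⬝ᵥ Q *ᵥ x + y ⬝ᵥ Q *ᵥ y := by
    rcases hxy with hz | hz
    · exact add_pos_of_pos_of_nonneg (by simpa using hQ.dotProduct_mulVec_pos hz) (hQn y)
    · exact add_pos_of_nonneg_of_pos (hQn x) (by simpa using hQ.dotProduct_mulVec_pos hz)
  -- The cross terms of `hqx` and `hqy` cancel by symmetry of `S`.
  have hsum : x ⬝ᵥ S *ᵥ x + y ⬝ᵥ S *ᵥ y = x ⬝ᵥ Q *ᵥ x + y ⬝ᵥ Q *ᵥ y
      + (μ.re * μ.re + μ.im * μ.im) * (x ⬝ᵥ S *ᵥ x + y ⬝ᵥ S *ᵥ y) := by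
    linear_combination hqx + hqy
  have hS0 := add_nonneg (hSn x) (hSn y)
  have hsq : μ.re * μ.re + μ.im * μ.im < 1 := by
    by_contra! hc
    nlinarith
  have hnorm : ‖μ‖ * ‖μ‖ = μ.re * μ.re + μ.im * μ.im := by
    rw [Complex.norm_mul_self_eq_normSq, Complex.normSq_apply]
  nlinarith [norm_nonneg μ]

theorem transpose_eq_of_posDef {m : Type*} {S : Matrix m m ℝ} (hS : S.PosDef) : Sᵀ = S := by
  simpa using hS.isHermitian.eq

theorem posDef_of_le {m : Type*} {Q S : Matrix m m ℝ} (hQ : Q.PosDef) (h : Q ≤ S) : S.PosDef := by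
  simpa using hQ.add_posSemidef (Matrix.le_iff.mp h)

/-! ### The Riccati map -/

section Riccati

variable {k l : Type*} [Fintype k] [Fintype l] [DecidableEq l]

/-- One step of the error covariance recursion of the observer with gain `L`:
`S ↦ Q + (A - L C) S (A - L C)ᵀ`. -/
def closedLoopMap (A : Matrix k k ℝ) (C : Matrix l k ℝ) (Q : Matrix k k ℝ) (L : Matrix k l ℝ)
    (S : Matrix k k ℝ) : Matrix k k ℝ :=
  Q + (A - L * C) * S * (A - L * C)ᵀ

/-- The optimal observer gain `A S Cᵀ (C S Cᵀ)⁻¹` for the covariance `S`. It is used only where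
`C S Cᵀ` is invertible. -/
noncomputable def riccatiGain (A : Matrix k k ℝ) (C : Matrix l k ℝ) (S : Matrix k k ℝ) :
    Matrix k l ℝ :=
  A * S * Cᵀ * (C * S * Cᵀ)⁻¹

/-- The right-hand side of the Riccati equation, as a function of `S`. -/
noncomputable def riccatiMap (A : Matrix k k ℝ) (C : Matrix l k ℝ) (Q S : Matrix k k ℝ) :
    Matrix k k ℝ :=
  Q + A * S * Aᵀ - A * S * Cᵀ * (C * S * Cᵀ)⁻¹ * (C * S * Aᵀ)

variable {A Q S S' : Matrix k k ℝ} {C : Matrix l k ℝ}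

omit [DecidableEq l] in
theorem posDef_innovation (hC : Function.Injective C.vecMul) (hS : S.PosDef) :
    (C * S * Cᵀ).PosDef := by
  simpa using hS.mul_mul_conjTranspose_same hC

/-- Completion of the square: among all gains `L`, the update `closedLoopMap A C Q L S` is
minimized at `riccatiGain A C S`, with value `riccatiMap A C Q S`. -/
theorem closedLoopMap_eq (hC : Function.Injective C.vecMul) (hS : S.PosDef) (L : Matrix k l ℝ) :
    closedLoopMap A C Q L S = riccatiMap A C Q S
      + (L - riccatiGain A C S) * (C * S * Cᵀ) * (L - riccatiGain A C S)ᵀ := by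
  have hT := posDef_innovation hC hS
  have hdet : IsUnit (C * S * Cᵀ).det := (Matrix.isUnit_iff_isUnit_det _).mp hT.isUnit
  have hSt := transpose_eq_of_posDef hS
  have hinv : (C * S * Cᵀ)⁻¹ᵀ = (C * S * Cᵀ)⁻¹ := transpose_eq_of_posDef hT.inv
  have hK1 : riccatiGain A C S * (C * S * Cᵀ) = A * S * Cᵀ := by
    rw [riccatiGain, Matrix.mul_assoc, Matrix.nonsing_inv_mul _ hdet, Matrix.mul_one]
  have hKt : (riccatiGain A C S)ᵀ = (C * S * Cᵀ)⁻¹ * (C * S * Aᵀ) := by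
    rw [riccatiGain, Matrix.transpose_mul, hinv, Matrix.transpose_mul, Matrix.transpose_mul,
      Matrix.transpose_transpose, hSt, Matrix.mul_assoc C S Aᵀ]
  have hK2 : (C * S * Cᵀ) * (riccatiGain A C S)ᵀ = C * S * Aᵀ := by
    rw [hKt, ← Matrix.mul_assoc, Matrix.mul_nonsing_inv _ hdet, Matrix.one_mul]
  have hmid : A * S * Cᵀ * (C * S * Cᵀ)⁻¹ * (C * S * Aᵀ)
      = A * S * Cᵀ * (riccatiGain A C S)ᵀ := by rw [hKt, Matrix.mul_assoc]
  have hLK : L * (C * S * Cᵀ) * (riccatiGain A C S)ᵀ = L * (C * S * Aᵀ) := by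
    rw [Matrix.mul_assoc, hK2]
  rw [closedLoopMap, riccatiMap, hmid, Matrix.sub_mul L, hK1, Matrix.transpose_sub L,
    Matrix.mul_sub _ Lᵀ, Matrix.sub_mul _ _ (riccatiGain A C S)ᵀ, hLK, Matrix.transpose_sub,
    Matrix.transpose_mul]
  simp only [Matrix.mul_sub, Matrix.sub_mul, Matrix.mul_assoc]
  abel

theorem riccatiMap_eq_closedLoopMap (hC : Function.Injective C.vecMul) (hS : S.PosDef) :
    riccatiMap A C Q S = closedLoopMap A C Q (riccatiGain A C S) S := by
  rw [closedLoopMap_eq hC hS]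
  simp

theorem riccatiMap_le_closedLoopMap (hC : Function.Injective C.vecMul) (hS : S.PosDef)
    (L : Matrix k l ℝ) : riccatiMap A C Q S ≤ closedLoopMap A C Q L S := by
  rw [closedLoopMap_eq hC hS L]
  have h0 := conj_le_conj (posDef_innovation hC hS).posSemidef.nonneg (L - riccatiGain A C S)
  simpa using h0

omit [DecidableEq l] in
theorem closedLoopMap_mono (h : S ≤ S') (L : Matrix k l ℝ) :
    closedLoopMap A C Q L S ≤ closedLoopMap A C Q L S' :=
  add_le_add_right (conj_le_conj h _) _

theorem riccatiMap_mono (hC : Function.Injective C.vecMul) (hS : S.PosDef) (hS' : S'.PosDef)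
    (h : S ≤ S') : riccatiMap A C Q S ≤ riccatiMap A C Q S' := by
  rw [riccatiMap_eq_closedLoopMap hC hS']
  exact (riccatiMap_le_closedLoopMap hC hS _).trans (closedLoopMap_mono h _)

theorem le_riccatiMap (hC : Function.Injective C.vecMul) (hS : S.PosDef) :
    Q ≤ riccatiMap A C Q S := by
  rw [riccatiMap_eq_closedLoopMap hC hS, closedLoopMap]
  simpa using conj_le_conj hS.posSemidef.nonneg (A - riccatiGain A C S * C)

theorem continuousAt_riccatiMap (hC : Function.Injective C.vecMul) (hS : S.PosDef) :
    ContinuousAt (riccatiMap A C Q) S := by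
  have hdet : (C * S * Cᵀ).det ≠ 0 :=
    ((Matrix.isUnit_iff_isUnit_det _).mp (posDef_innovation hC hS).isUnit).ne_zero
  have hinv : ContinuousAt (fun X : Matrix k k ℝ => (C * X * Cᵀ)⁻¹) S := by
    have h1 : ContinuousAt Inv.inv (C * S * Cᵀ) := by
      refine continuousAt_matrix_inv _ ?_
      rw [Ring.inverse_eq_inv']
      exact continuousAt_inv₀ hdet
    have h2 : ContinuousAt (fun X : Matrix k k ℝ => C * X * Cᵀ) S := by fun_prop
    exact ContinuousAt.comp (f := fun X : Matrix k k ℝ => C * X * Cᵀ) h1 h2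
  have hU : Continuous fun X : Matrix k k ℝ => A * X * Cᵀ := by fun_prop
  have hV : Continuous fun X : Matrix k k ℝ => C * X * Aᵀ := by fun_prop
  have hW : Continuous fun X : Matrix k k ℝ => Q + A * X * Aᵀ := by fun_prop
  have hc : Continuous fun p : Matrix k l ℝ × Matrix l l ℝ × Matrix l k ℝ =>
    p.1 * p.2.1 * p.2.2 := by fun_prop
  have hp : ContinuousAt (fun X : Matrix k k ℝ => A * X * Cᵀ * (C * X * Cᵀ)⁻¹ * (C * X * Aᵀ)) S :=
    ContinuousAt.comp (f := fun X : Matrix k k ℝ => (A * X * Cᵀ, (C * X * Cᵀ)⁻¹, C * X * Aᵀ))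
      hc.continuousAt (hU.continuousAt.prodMk (hinv.prodMk hV.continuousAt))
  exact hW.continuousAt.sub hp

/-- The Riccati iteration started at `Q` increases and stays below the Lyapunov solution `P` of
the closed loop with the given stabilizing gain `L`, so it converges. -/
theorem exists_riccati_fixedPoint [DecidableEq k] (hC : Function.Injective C.vecMul)
    (hQ : Q.PosDef) {L : Matrix k l ℝ} (hL : SchurStable (A - L * C)) :
    ∃ S : Matrix k k ℝ, S.PosDef ∧ S = riccatiMap A C Q S := by
  obtain ⟨P, hQP, hP⟩ := hL.exists_lyapunov hQ.posSemidef.nonneg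
  let f : ℕ → Matrix k k ℝ := fun j => (riccatiMap A C Q)^[j] Q
  have hsucc : ∀ j, f (j + 1) = riccatiMap A C Q (f j) := fun j =>
    Function.iterate_succ_apply' _ _ _
  have hlow : ∀ j, Q ≤ f j := by
    intro j
    induction j with
    | zero => exact le_rfl
    | succ j ih => rw [hsucc]; exact le_riccatiMap hC (posDef_of_le hQ ih)
  have hpos : ∀ j, (f j).PosDef := fun j => posDef_of_le hQ (hlow j)
  have hmono : Monotone f := by
    refine monotone_nat_of_le_succ fun j => ?_
    induction j with
    | zero => exact hlow 1
    | succ j ih => rw [hsucc j, hsucc (j + 1)]; exact riccatiMap_mono hC (hpos _) (hpos _) ih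
  have hup : ∀ j, f j ≤ P := by
    intro j
    induction j with
    | zero => exact hQP
    | succ j ih =>
      rw [hsucc, hP]
      exact (riccatiMap_le_closedLoopMap hC (hpos j) L).trans (closedLoopMap_mono ih L)
  obtain ⟨S, hS⟩ := exists_tendsto_of_monotone (fun j => (hpos j).isHermitian) hmono hup
  have hQS : Q ≤ S := sub_nonneg.mp <|
    nonneg_of_tendsto (hS.sub_const Q) fun j => sub_nonneg.mpr (hlow j)
  have hSp := posDef_of_le hQ hQS
  refine ⟨S, hSp, ?_⟩
  have h1 : Tendsto (fun j => f (j + 1)) atTop (𝓝 (riccatiMap A C Q S)) := by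
    simp only [hsucc]
    exact (continuousAt_riccatiMap hC hSp).tendsto.comp hS
  exact tendsto_nhds_unique ((tendsto_add_atTop_iff_nat 1).mpr hS) h1

theorem schurStable_of_riccati [DecidableEq k] (hC : Function.Injective C.vecMul)
    (hQ : Q.PosDef) (hS : S.PosDef) (h : S = riccatiMap A C Q S) :
    SchurStable (A - riccatiGain A C S * C) :=
  schurStable_of_lyapunov hQ hS.posSemidef.nonneg
    (h.trans (riccatiMap_eq_closedLoopMap hC hS))

/-- Using the gain of the second fixed point in the update of the first shows that their
difference `D` satisfies `D ≤ M D Mᵀ`, where `M` is the stable closed loop of the second. -/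
theorem riccati_fixedPoint_le [DecidableEq k] (hC : Function.Injective C.vecMul)
    (hQ : Q.PosDef) (hS : S.PosDef) (hS' : S'.PosDef) (h : S = riccatiMap A C Q S)
    (h' : S' = riccatiMap A C Q S') : S ≤ S' := by
  have hM := schurStable_of_riccati hC hQ hS' h'
  refine sub_nonpos.mp (hM.nonpos_of_le_conj ?_)
  have h1 : S ≤ closedLoopMap A C Q (riccatiGain A C S') S := by
    conv_lhs => rw [h]
    exact riccatiMap_le_closedLoopMap hC hS _
  have h2 : S' = closedLoopMap A C Q (riccatiGain A C S') S' :=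
    h'.trans (riccatiMap_eq_closedLoopMap hC hS')
  refine (sub_le_sub h1 h2.ge).trans_eq ?_
  simp only [closedLoopMap, Matrix.mul_sub, Matrix.sub_mul]
  abel

end Riccati

theorem vecMul_injective_of_rank {n d : ℕ} {C : Matrix (Fin d) (Fin n) ℝ} (hC : C.rank = d) :
    Function.Injective C.vecMul := by
  rw [Matrix.vecMul_injective_iff, linearIndependent_iff_card_eq_finrank_span, Fintype.card_fin,
    Set.finrank, ← Matrix.rank_eq_finrank_span_row, hC]

theorem riccati_existence_uniqueness_stability {n d : ℕ}
    (A : Matrix (Fin n) (Fin n) ℝ) (C : Matrix (Fin d) (Fin n) ℝ)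
    (hC : C.rank = d)
    (Δ : Matrix (Fin n) (Fin n) ℝ) (hΔ : Δ.PosDef)
    (L0 : Matrix (Fin n) (Fin d) ℝ) (hL0 : SchurStable (A - L0 * C)) :
    ∃ Sh : Matrix (Fin n) (Fin n) ℝ,
      Sh.PosDef
      ∧ Sh = Δ + A * Sh * Aᵀ - A * Sh * Cᵀ * (C * Sh * Cᵀ)⁻¹ * (C * Sh * Aᵀ)
      ∧ SchurStable (A - (A * Sh * Cᵀ * (C * Sh * Cᵀ)⁻¹) * C)
      ∧ ∀ S' : Matrix (Fin n) (Fin n) ℝ, S'.PosDef →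
          S' = Δ + A * S' * Aᵀ - A * S' * Cᵀ * (C * S' * Cᵀ)⁻¹ * (C * S' * Aᵀ) →
          S' = Sh := by
  have hinj := vecMul_injective_of_rank hC
  obtain ⟨S, hS, h⟩ := exists_riccati_fixedPoint hinj hΔ hL0
  exact ⟨S, hS, h, schurStable_of_riccati hinj hΔ hS h, fun S' hS' h' =>
    le_antisymm (riccati_fixedPoint_le hinj hΔ hS' hS h' h)
      (riccati_fixedPoint_le hinj hΔ hS hS' h h')⟩
end

section
/- Let A ∈ ℝ^{n×n}, C ∈ ℝ^{d×n}, Δ ∈ ℝ^{n×n} symmetric. Let Σ̂ ∈ ℝ^{n×n} be symmetric with C Σ̂ C^T invertible such that Σ̂ = Δ + A Σ̂ A^T − A Σ̂ C^T (C Σ̂ C^T)^{-1} C Σ̂ A^T, and set L* = A Σ̂ C^T (C Σ̂ C^T)^{-1}. Let L ∈ ℝ^{n×d} be such that A − LC is Schur stable and let Σ_L ∈ ℝ^{n×n} be symmetric with Σ_L = Δ + (A − LC) Σ_L (A − LC)^T. Then Σ_L − Σ̂ = (A − LC)(Σ_L − Σ̂)(A − LC)^T + (L* − L)(C Σ̂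 C^T)(L* − L)^T; consequently, if Σ̂ is positive definite, then Σ_L − Σ̂ is positive semidefinite. -/
/-!
Write `F = A - L C`, `S = C Σ̂ Cᵀ` and `D = Σ_L - Σ̂`. Since `S` is symmetric and invertible,
`L⋆ S = A Σ̂ Cᵀ`, and transposing gives `S L⋆ᵀ = C Σ̂ Aᵀ`; hence the Riccati equation reads
`Σ̂ = Δ + A Σ̂ Aᵀ - L⋆ S L⋆ᵀ`, and completing the square turns it into
`Σ̂ = Δ + F Σ̂ Fᵀ - (L⋆ - L) S (L⋆ - L)ᵀ`. Subtracting this from the Lyapunov equation for `Σ_L`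
gives `D = F D Fᵀ + (L⋆ - L) S (L⋆ - L)ᵀ`.

If `Σ̂` is positive definite, the forcing term is positive semidefinite, so iterating the identity
shows that `D - Fᵏ D (Fᵏ)ᵀ` is positive semidefinite for every `k` (`posSemidef_sub_pow`). Gelfand's
formula gives `Fᵏ → 0` for a Schur stable `F` (`SchurStable.tendsto_pow`), so `D` is a limit of
positive semidefinite matrices.
-/

open Matrix

open Filter Topology

section Powers

attribute [local instance] Matrix.linftyOpNormedRing Matrix.linftyOpNormedAlgebra

/-- In a complex Banach algebra, the powers of an element with spectral radius below `1` tend to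
zero: by Gelfand's formula they are eventually dominated by a geometric sequence. -/
theorem tendsto_pow_of_spectralRadius_lt_one {R : Type*} [NormedRing R] [NormedAlgebra ℂ R]
    [CompleteSpace R] (a : R) (ha : spectralRadius ℂ a < 1) :
    Tendsto (fun k : ℕ => a ^ k) atTop (𝓝 0) := by
  obtain ⟨r, har, hr1⟩ := ENNReal.lt_iff_exists_nnreal_btwn.1 ha
  have hr1' : (r : ℝ) < 1 := by exact_mod_cast hr1
  have hev := (spectrum.pow_nnnorm_pow_one_div_tendsto_nhds_spectralRadius a).eventually
    (gt_mem_nhds har)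
  refine squeeze_zero_norm' ?_ (tendsto_pow_atTop_nhds_zero_of_lt_one r.coe_nonneg hr1')
  filter_upwards [hev, eventually_gt_atTop 0] with k hk hk0
  have hk0' : (0 : ℝ) < k := by exact_mod_cast hk0
  have h1 := ENNReal.rpow_le_rpow hk.le hk0'.le
  rw [← ENNReal.rpow_mul, one_div_mul_cancel hk0'.ne', ENNReal.rpow_one,
    ENNReal.rpow_natCast] at h1
  exact_mod_cast h1

theorem SchurStable.tendsto_pow {n : ℕ} {F : Matrix (Fin n) (Fin n) ℝ} (hF : SchurStable F) :
    Tendsto (fun k : ℕ => F ^ k) atTop (𝓝 0) := by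
  -- The spectrum of a `0 × 0` matrix is empty, so nontriviality has to be split off.
  rcases isEmpty_or_nonempty (Fin n) with h | h
  · exact tendsto_const_nhds.congr fun k => Subsingleton.elim _ _
  have hrad : spectralRadius ℂ (F.map (fun x => (x : ℂ))) < 1 := by
    refine spectrum.spectralRadius_lt_of_forall_lt (r := 1) _ fun z hz => ?_
    rw [spectrum.mem_iff, Matrix.isUnit_iff_isUnit_det, isUnit_iff_ne_zero, not_not] at hz
    obtain ⟨v, hv0, hv⟩ := Matrix.exists_mulVec_eq_zero_iff.2 hz
    refine hF z v hv0 ?_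
    rw [Matrix.sub_mulVec, sub_eq_zero, Algebra.algebraMap_eq_smul_one, Matrix.smul_mulVec,
      Matrix.one_mulVec] at hv
    exact hv.symm
  have hlim := tendsto_pow_of_spectralRadius_lt_one _ hrad
  have hre : Continuous fun M : Matrix (Fin n) (Fin n) ℂ => M.map Complex.re :=
    continuous_id.matrix_map Complex.continuous_re
  have hlim' := (hre.tendsto 0).comp hlim
  have h0 : (0 : Matrix (Fin n) (Fin n) ℂ).map Complex.re = 0 := by ext; simp
  rw [h0] at hlim'
  refine hlim'.congr fun k => ?_
  have hmap : F.map (fun x => (x : ℂ)) ^ k = (F ^ k).map (fun x => (x : ℂ)) :=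
    (map_pow (Complex.ofRealHom.mapMatrix) F k).symm
  ext i j
  simp [hmap]

end Powers

theorem posSemidef_sub_pow {n : ℕ} {F D Q : Matrix (Fin n) (Fin n) ℝ}
    (hD : D = F * D * Fᵀ + Q) (hQ : Q.PosSemidef) (k : ℕ) :
    (D - F ^ k * D * (F ^ k)ᵀ).PosSemidef := by
  induction k with
  | zero => simpa using Matrix.PosSemidef.zero
  | succ k ih =>
    have h : D - F ^ (k + 1) * D * (F ^ (k + 1))ᵀ
        = (D - F ^ k * D * (F ^ k)ᵀ) + F ^ k * Q * (F ^ k)ᵀ := by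
      have hQ' : Q = D - F * D * Fᵀ := eq_sub_of_add_eq' hD.symm
      rw [hQ', pow_succ, Matrix.transpose_mul]
      noncomm_ring
    rw [h]
    exact ih.add (by simpa using hQ.mul_mul_conjTranspose_same (F ^ k))

/-- A symmetric solution of a discrete Lyapunov equation with Schur stable coefficient and positive
semidefinite forcing is positive semidefinite. -/
theorem posSemidef_of_lyapunov {n : ℕ} {F D Q : Matrix (Fin n) (Fin n) ℝ}
    (hF : SchurStable F) (hDsym : Dᵀ = D) (hD : D = F * D * Fᵀ + Q) (hQ : Q.PosSemidef) :
    D.PosSemidef := by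
  refine Matrix.PosSemidef.of_dotProduct_mulVec_nonneg (by simpa [Matrix.IsHermitian] using hDsym)
    fun x => ?_
  have hcont : Continuous fun M : Matrix (Fin n) (Fin n) ℝ =>
      star x ⬝ᵥ ((D - M * D * Mᵀ) *ᵥ x) := by fun_prop
  have hlim := (hcont.tendsto 0).comp hF.tendsto_pow
  simp only [Matrix.zero_mul, sub_zero] at hlim
  exact ge_of_tendsto' hlim fun k => (posSemidef_sub_pow hD hQ k).dotProduct_mulVec_nonneg x

theorem suboptimality_difference_identity {n d : ℕ}
    (A : Matrix (Fin n) (Fin n) ℝ) (C : Matrix (Fin d) (Fin n) ℝ)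
    (Δ : Matrix (Fin n) (Fin n) ℝ) (hΔ : Δᵀ = Δ)
    (Sh : Matrix (Fin n) (Fin n) ℝ) (hShsym : Shᵀ = Sh)
    (hinv : IsUnit (C * Sh * Cᵀ).det)
    (hRic : Sh = Δ + A * Sh * Aᵀ - A * Sh * Cᵀ * (C * Sh * Cᵀ)⁻¹ * (C * Sh * Aᵀ))
    (Lstar : Matrix (Fin n) (Fin d) ℝ)
    (hLstar : Lstar = A * Sh * Cᵀ * (C * Sh * Cᵀ)⁻¹)
    (L : Matrix (Fin n) (Fin d) ℝ) (hL : SchurStable (A - L * C))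
    (SL : Matrix (Fin n) (Fin n) ℝ) (hSLsym : SLᵀ = SL)
    (hLyap : SL = Δ + (A - L * C) * SL * (A - L * C)ᵀ) :
    SL - Sh = (A - L * C) * (SL - Sh) * (A - L * C)ᵀ
        + (Lstar - L) * (C * Sh * Cᵀ) * (Lstar - L)ᵀ
    ∧ (Sh.PosDef → (SL - Sh).PosSemidef) := by
  have hSsym : (C * Sh * Cᵀ)ᵀ = C * Sh * Cᵀ := by
    simp [Matrix.transpose_mul, hShsym, Matrix.mul_assoc]
  have h1 : Lstar * (C * Sh * Cᵀ) = A * Sh * Cᵀ := by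
    rw [hLstar, Matrix.nonsing_inv_mul_cancel_right _ _ hinv]
  have h2 : (C * Sh * Cᵀ) * Lstarᵀ = C * Sh * Aᵀ := by
    have h := congrArg Matrix.transpose h1
    rw [Matrix.transpose_mul, hSsym] at h
    simpa [Matrix.transpose_mul, hShsym, Matrix.mul_assoc] using h
  have hid : SL - Sh = (A - L * C) * (SL - Sh) * (A - L * C)ᵀ
      + (Lstar - L) * (C * Sh * Cᵀ) * (Lstar - L)ᵀ := by
    have hRic' : Sh = Δ + A * Sh * Aᵀ - Lstar * (C * Sh * Aᵀ) := by rw [hLstar]; exact hRic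
    have hsq : (Lstar - L) * (C * Sh * Cᵀ) * (Lstar - L)ᵀ
        = Lstar * (C * Sh * Aᵀ) - A * Sh * Cᵀ * Lᵀ - L * (C * Sh * Aᵀ)
          + L * (C * Sh * Cᵀ) * Lᵀ := by
      rw [Matrix.transpose_sub, Matrix.mul_sub, Matrix.sub_mul, Matrix.sub_mul, Matrix.sub_mul,
        Matrix.mul_assoc Lstar _ Lstarᵀ, Matrix.mul_assoc L _ Lstarᵀ, h2, h1]
      abel
    have hF : (A - L * C) * Sh * (A - L * C)ᵀ
        = A * Sh * Aᵀ - A * Sh * Cᵀ * Lᵀ - L * (C * Sh * Aᵀ) + L * (C * Sh * Cᵀ) * Lᵀ := by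
      simp only [Matrix.transpose_sub, Matrix.transpose_mul, Matrix.mul_sub, Matrix.sub_mul,
        Matrix.mul_assoc]
      abel
    have hSL : (A - L * C) * SL * (A - L * C)ᵀ = SL - Δ := eq_sub_of_add_eq' hLyap.symm
    have hΔ' : Δ = Sh - A * Sh * Aᵀ + Lstar * (C * Sh * Aᵀ) := by
      rw [sub_add]
      refine eq_sub_of_add_eq ?_
      rw [← add_sub_assoc]
      exact hRic'.symm
    rw [Matrix.mul_sub, Matrix.sub_mul, hsq, hF, hSL, hΔ']
    abel
  refine ⟨hid, fun hpos => posSemidef_of_lyapunov hL ?_ hid ?_⟩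
  · rw [Matrix.transpose_sub, hSLsym, hShsym]
  · have hS : (C * Sh * Cᵀ).PosSemidef := by
      simpa using hpos.posSemidef.mul_mul_conjTranspose_same C
    simpa using hS.mul_mul_conjTranspose_same (Lstar - L)
end

section
/- In the stationarity setting, the blocks of P and Σ satisfy P12^T Σ12 + P22 Σ22 = 0; equivalently, P12 and Σ12 are invertible and (−P22^{-1} P12^T)^{-1} = Σ12 Σ22^{-1}. -/
/-!
Write `E₁` and `E₃` for the left-hand sides of the stationarity equations in `C_K` and `A_K`.
Multiplying the second block row of the Lyapunov equation for `P` on the right by the second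
block column `(Σ₁₂, Σ₂₂)` of `Σ` and collecting terms gives the identity
`P₁₂ᵀ Σ₁₂ + P₂₂ Σ₂₂ = C_Kᵀ E₁ + A_Kᵀ E₃`; the weight `C_Kᵀ R C_K` supplies exactly the `R`-term
of `E₁`, and the terms starting with `(B C_K)ᵀ` supply the rest of it, while
the terms starting with `A_Kᵀ` form `A_Kᵀ E₃`. So the sum vanishes.
The diagonal blocks `P₂₂`, `Σ₂₂` of positive definite matrices are invertible, hence so is
`P₁₂ᵀ Σ₁₂ = -P₂₂ Σ₂₂`, which gives the invertibility of both factors and the inverse formula.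
-/

open Matrix

theorem stationary_P_Sigma_block_identity {n m d : ℕ}
    (A : Matrix (Fin n) (Fin n) ℝ) (B : Matrix (Fin n) (Fin m) ℝ)
    (C : Matrix (Fin d) (Fin n) ℝ)
    (Q : Matrix (Fin n) (Fin n) ℝ) (R : Matrix (Fin m) (Fin m) ℝ)
    (hQ : Q.PosSemidef) (hR : R.PosDef) (hC : C.rank = d)
    (AK : Matrix (Fin n) (Fin n) ℝ) (BK : Matrix (Fin n) (Fin d) ℝ)
    (CK : Matrix (Fin m) (Fin n) ℝ)
    (X P S : Matrix (Fin n ⊕ Fin n) (Fin n ⊕ Fin n) ℝ)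
    (hX : X.PosDef) (hP : P.PosDef) (hS : S.PosDef)
    (hLyapP : P = Qcl Q R CK + (Acl A B C AK BK CK)ᵀ * P * Acl A B C AK BK CK)
    (hLyapS : S = X + Acl A B C AK BK CK * S * (Acl A B C AK BK CK)ᵀ)
    (P11 P12 P22 S11 S12 S22 X11 X12 X22 : Matrix (Fin n) (Fin n) ℝ)
    (hP11 : P11 = P.toBlocks₁₁) (hP12 : P12 = P.toBlocks₁₂) (hP22 : P22 = P.toBlocks₂₂)
    (hS11 : S11 = S.toBlocks₁₁) (hS12 : S12 = S.toBlocks₁₂) (hS22 : S22 = S.toBlocks₂₂)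
    (hX11 : X11 = X.toBlocks₁₁) (hX12 : X12 = X.toBlocks₁₂) (hX22 : X22 = X.toBlocks₂₂)
    (hstat1 : Bᵀ * (P11 * A + P12 * (BK * C)) * S12
        + ((R + Bᵀ * P11 * B) * CK + Bᵀ * P12 * AK) * S22 = 0)
    (hstat2 : (P12ᵀ * A + P22 * (BK * C)) * S11 * Cᵀ
        + (P12ᵀ * (B * CK) + P22 * AK) * S12ᵀ * Cᵀ = 0)
    (hstat3 : (P12ᵀ * (B * CK) + P22 * AK) * S22
        + (P12ᵀ * A + P22 * (BK * C)) * S12 = 0)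
    :
    P12ᵀ * S12 + P22 * S22 = 0
    ∧ IsUnit P12.det ∧ IsUnit S12.det
    ∧ (-(P22⁻¹ * P12ᵀ))⁻¹ = S12 * S22⁻¹ := by
  have hP21 : P.toBlocks₂₁ = P12ᵀ := by
    rw [hP12]
    ext i j
    simpa [toBlocks₁₂, toBlocks₂₁] using (hP.isHermitian.apply (Sum.inr i) (Sum.inl j)).symm
  have hPb : P = fromBlocks P11 P12 P12ᵀ P22 := by
    rw [← hP21, hP11, hP12, hP22, fromBlocks_toBlocks]
  -- `h21` and `h22` below are the second block row of the Lyapunov equation for `P`.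
  have hL := hLyapP
  rw [hPb, Qcl, Acl, fromBlocks_transpose, fromBlocks_multiply, fromBlocks_multiply,
    fromBlocks_add, fromBlocks_inj] at hL
  obtain ⟨-, -, h21, h22⟩ := hL
  have key : P12ᵀ * S12 + P22 * S22 = 0 := by
    calc P12ᵀ * S12 + P22 * S22
        = CKᵀ * (Bᵀ * (P11 * A + P12 * (BK * C)) * S12
            + ((R + Bᵀ * P11 * B) * CK + Bᵀ * P12 * AK) * S22)
          + AKᵀ * ((P12ᵀ * (B * CK) + P22 * AK) * S22
            + (P12ᵀ * A + P22 * (BK * C)) * S12) := by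
          -- `P12ᵀ` and `P22` recur on the right of `h21` and `h22`, so the substitution is done
          -- once, by congruence rather than by rewriting.
          have e : P12ᵀ * S12 + P22 * S22 = _ * S12 + _ * S22 :=
            congrArg₂ (fun U V => U * S12 + V * S22) h21 h22
          rw [e]
          simp only [transpose_mul, Matrix.mul_add, Matrix.add_mul, Matrix.mul_assoc, zero_add]
          abel
      _ = 0 := by rw [hstat1, hstat3, Matrix.mul_zero, Matrix.mul_zero, add_zero]
  have uP : IsUnit P22.det := by
    rw [hP22]
    exact (isUnit_iff_isUnit_det _).mp (hP.submatrix Sum.inr_injective).isUnit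
  have uS : IsUnit S22.det := by
    rw [hS22]
    exact (isUnit_iff_isUnit_det _).mp (hS.submatrix Sum.inr_injective).isUnit
  have key' : P12ᵀ * S12 = -(P22 * S22) := eq_neg_of_add_eq_zero_left key
  have u : IsUnit (P12ᵀ * S12).det := by
    rw [key', ← isUnit_iff_isUnit_det, IsUnit.neg_iff, isUnit_iff_isUnit_det, det_mul]
    exact uP.mul uS
  rw [det_mul, det_transpose, IsUnit.mul_iff] at u
  refine ⟨key, u.1, u.2, inv_eq_right_inv ?_⟩
  calc -(P22⁻¹ * P12ᵀ) * (S12 * S22⁻¹) = -(P22⁻¹ * (P12ᵀ * S12) * S22⁻¹) := by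
        simp only [Matrix.neg_mul, Matrix.mul_assoc]
    _ = (P22⁻¹ * P22) * (S22 * S22⁻¹) := by
        rw [key']
        simp only [Matrix.neg_mul, Matrix.mul_neg, neg_neg, Matrix.mul_assoc]
    _ = 1 := by rw [nonsing_inv_mul _ uP, mul_nonsing_inv _ uS, Matrix.mul_one]
end

section
/- In the stationarity setting, the blocks of P and of the initial second-moment matrix X satisfy P12^T X12 + P22 X22 = 0; consequently, both X12 and P12 are invertible, and −P22^{-1} P12^T = X22 X12^{-1}. In particular, an observable stationary point can exist only if X12 is invertible. -/
/-!
The block `P₁₂ᵀ X₁₂ + P₂₂ X₂₂` is the lower-right block of `P X`, and both Lyapunov equations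
feed into it. With `[U, V]` the second block row of `P Acl`, the equation `X = Σ - Acl Σ Aclᵀ` gives

  `P₁₂ᵀ X₁₂ + P₂₂ X₂₂ = (P₁₂ᵀ Σ₁₂ + P₂₂ Σ₂₂) - [U, V] Σ [BK C, AK]ᵀ`,

where the last term vanishes by the second and third stationarity equations. Substituting the
Lyapunov equation for the second block row of `P` turns `P₁₂ᵀ Σ₁₂ + P₂₂ Σ₂₂` into `CKᵀ` times the
first stationarity expression plus `AKᵀ` times the third, so it vanishes too. Hence
`P₁₂ᵀ X₁₂ = -P₂₂ X₂₂`, and the right side is invertible because diagonal blocks of positive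
definite matrices are positive definite; so both factors on the left are invertible.
-/

open Matrix

theorem toBlocks₂₁_eq_transpose {n : ℕ} {M : Matrix (Fin n ⊕ Fin n) (Fin n ⊕ Fin n) ℝ}
    (hM : M.PosDef) : M.toBlocks₂₁ = M.toBlocks₁₂ᵀ := by
  ext i j
  simpa [toBlocks₂₁, toBlocks₁₂] using (hM.isHermitian.apply (Sum.inr i) (Sum.inl j)).symm

theorem isUnit_det_toBlocks₂₂ {n : ℕ} {M : Matrix (Fin n ⊕ Fin n) (Fin n ⊕ Fin n) ℝ}
    (hM : M.PosDef) : IsUnit M.toBlocks₂₂.det := by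
  have h : M.toBlocks₂₂.PosDef := hM.submatrix Sum.inr_injective
  exact h.det_pos.ne'.isUnit

theorem stationary_P_X_block_identity {n m d : ℕ}
    (A : Matrix (Fin n) (Fin n) ℝ) (B : Matrix (Fin n) (Fin m) ℝ)
    (C : Matrix (Fin d) (Fin n) ℝ)
    (Q : Matrix (Fin n) (Fin n) ℝ) (R : Matrix (Fin m) (Fin m) ℝ)
    (hQ : Q.PosSemidef) (hR : R.PosDef) (hC : C.rank = d)
    (AK : Matrix (Fin n) (Fin n) ℝ) (BK : Matrix (Fin n) (Fin d) ℝ)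
    (CK : Matrix (Fin m) (Fin n) ℝ)
    (X P S : Matrix (Fin n ⊕ Fin n) (Fin n ⊕ Fin n) ℝ)
    (hX : X.PosDef) (hP : P.PosDef) (hS : S.PosDef)
    (hLyapP : P = Qcl Q R CK + (Acl A B C AK BK CK)ᵀ * P * Acl A B C AK BK CK)
    (hLyapS : S = X + Acl A B C AK BK CK * S * (Acl A B C AK BK CK)ᵀ)
    (P11 P12 P22 S11 S12 S22 X11 X12 X22 : Matrix (Fin n) (Fin n) ℝ)
    (hP11 : P11 = P.toBlocks₁₁) (hP12 : P12 = P.toBlocks₁₂) (hP22 : P22 = P.toBlocks₂₂)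
    (hS11 : S11 = S.toBlocks₁₁) (hS12 : S12 = S.toBlocks₁₂) (hS22 : S22 = S.toBlocks₂₂)
    (hX11 : X11 = X.toBlocks₁₁) (hX12 : X12 = X.toBlocks₁₂) (hX22 : X22 = X.toBlocks₂₂)
    (hstat1 : Bᵀ * (P11 * A + P12 * (BK * C)) * S12
        + ((R + Bᵀ * P11 * B) * CK + Bᵀ * P12 * AK) * S22 = 0)
    (hstat2 : (P12ᵀ * A + P22 * (BK * C)) * S11 * Cᵀ
        + (P12ᵀ * (B * CK) + P22 * AK) * S12ᵀ * Cᵀ = 0)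
    (hstat3 : (P12ᵀ * (B * CK) + P22 * AK) * S22
        + (P12ᵀ * A + P22 * (BK * C)) * S12 = 0)
    :
    P12ᵀ * X12 + P22 * X22 = 0
    ∧ IsUnit X12.det ∧ IsUnit P12.det
    ∧ -(P22⁻¹ * P12ᵀ) = X22 * X12⁻¹ := by
  have eP : P = fromBlocks P11 P12 P12ᵀ P22 := by
    rw [hP11, hP12, hP22, ← toBlocks₂₁_eq_transpose hP, fromBlocks_toBlocks]
  have eS : S = fromBlocks S11 S12 S12ᵀ S22 := by
    rw [hS11, hS12, hS22, ← toBlocks₂₁_eq_transpose hS, fromBlocks_toBlocks]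
  have eX : X = fromBlocks X11 X12 X12ᵀ X22 := by
    rw [hX11, hX12, hX22, ← toBlocks₂₁_eq_transpose hX, fromBlocks_toBlocks]
  have uP : IsUnit P22.det := hP22 ▸ isUnit_det_toBlocks₂₂ hP
  have uX : IsUnit X22.det := hX22 ▸ isUnit_det_toBlocks₂₂ hX
  clear hP11 hP12 hP22 hS11 hS12 hS22 hX11 hX12 hX22
  rw [eP] at hLyapP
  rw [eS, eX] at hLyapS
  simp only [Acl, Qcl, fromBlocks_transpose, fromBlocks_multiply, fromBlocks_add,
    fromBlocks_inj] at hLyapP hLyapS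
  obtain ⟨-, -, p21, p22⟩ := hLyapP
  obtain ⟨-, s12, -, s22⟩ := hLyapS
  have hPS : P12ᵀ * S12 + P22 * S22 = 0 := by
    have h : P12ᵀ * S12 + P22 * S22
        = CKᵀ * (Bᵀ * (P11 * A + P12 * (BK * C)) * S12
            + ((R + Bᵀ * P11 * B) * CK + Bᵀ * P12 * AK) * S22)
          + AKᵀ * ((P12ᵀ * (B * CK) + P22 * AK) * S22
            + (P12ᵀ * A + P22 * (BK * C)) * S12) := by
      -- each block is expanded once only, as it recurs on its own right-hand side
      refine (congrArg₂ (fun M N => M * S12 + N * S22) p21 p22).trans ?_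
      simp only [transpose_mul, Matrix.mul_add, Matrix.add_mul, Matrix.mul_assoc, _root_.zero_add]
      abel
    rw [h, hstat1, hstat3, Matrix.mul_zero, Matrix.mul_zero, add_zero]
  have hPX : P12ᵀ * X12 + P22 * X22 = 0 := by
    have h : P12ᵀ * S12 + P22 * S22 = P12ᵀ * X12 + P22 * X22
          + ((P12ᵀ * A + P22 * (BK * C)) * S11 * Cᵀ
            + (P12ᵀ * (B * CK) + P22 * AK) * S12ᵀ * Cᵀ) * BKᵀ
          + ((P12ᵀ * (B * CK) + P22 * AK) * S22
            + (P12ᵀ * A + P22 * (BK * C)) * S12) * AKᵀ := by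
      refine (congrArg₂ (fun M N => P12ᵀ * M + P22 * N) s12 s22).trans ?_
      simp only [transpose_mul, Matrix.mul_add, Matrix.add_mul, Matrix.mul_assoc]
      abel
    rw [hPS, hstat2, hstat3, Matrix.zero_mul, Matrix.zero_mul, add_zero, add_zero] at h
    exact h.symm
  have hneg : P12ᵀ * X12 = -(P22 * X22) := eq_neg_of_add_eq_zero_left hPX
  have hu : IsUnit (P12.det * X12.det) := by
    rw [← det_transpose P12, ← det_mul, ← isUnit_iff_isUnit_det, hneg, IsUnit.neg_iff,
      isUnit_iff_isUnit_det, det_mul]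
    exact uP.mul uX
  have uX12 : IsUnit X12.det := isUnit_of_mul_isUnit_right hu
  refine ⟨hPX, uX12, isUnit_of_mul_isUnit_left hu, ?_⟩
  calc -(P22⁻¹ * P12ᵀ) = -(P22⁻¹ * (P12ᵀ * X12 * X12⁻¹)) := by
        rw [mul_nonsing_inv_cancel_right _ _ uX12]
    _ = P22⁻¹ * (P22 * X22) * X12⁻¹ := by
        rw [hneg, Matrix.neg_mul, Matrix.mul_neg, neg_neg, Matrix.mul_assoc P22⁻¹]
    _ = X22 * X12⁻¹ := by rw [nonsing_inv_mul_cancel_left _ _ uP]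
end

section
/- In the stationarity setting, the Schur complement P̂ = P11 − P12 P22^{-1} P12^T satisfies the discrete-time algebraic Riccati equation P̂ = Q + A^T P̂ A − A^T P̂ B (R + B^T P̂ B)^{-1} B^T P̂ A. -/
/-!
Factor the closed-loop cost by completing the square in the controller state: with
`N = P22⁻¹ P12ᵀ`, one has `P = diag(Phat, 0) + [N I]ᵀ P22 [N I]`.  Put `T = S12 S22⁻¹` and
`D = N A + BK C`.  The third stationarity equation says exactly that the closed loop satisfies
`[N I] Acl = D [I, -T]`, and then the first one becomes `U CK = -F T` with
`U = R + Bᵀ Phat B` and `F = Bᵀ Phat A`.  Inserting these into the Lyapunov equation for `P` and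
writing `W = Dᵀ P22 D`, `G = Fᵀ U⁻¹ F + W`, its blocks read

* `P11 = Q + Aᵀ Phat A + W`,
* `P12 = -G T`,
* `P22 = Tᵀ G T`.

Since `P22` is invertible and all blocks are square, `T` and `G` are invertible, whence
`P12 P22⁻¹ P12ᵀ = G`; subtracting this from `P11` cancels `W` and leaves the Riccati equation.
-/

open Matrix

/-- The algebraic elimination of the Schur complement: a factorisation of the off-diagonal and
lower diagonal blocks through a common `G` forces the square matrices `T` and `G` to be
invertible, so that `P12 N = P12 P22⁻¹ P12ᵀ` collapses to `G`. -/
lemma schur_term_eq {n : ℕ} {P12 P22 N T G : Matrix (Fin n) (Fin n) ℝ}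
    (hu : IsUnit P22.det) (hG : Gᵀ = G) (hN : P12ᵀ = P22 * N)
    (h12 : P12 = -(G * T)) (h22 : P22 = Tᵀ * G * T) :
    P12 * N = G := by
  have hTG : IsUnit (Tᵀ * G).det := by
    rw [h22, det_mul] at hu
    exact isUnit_of_mul_isUnit_left hu
  have h1 : Tᵀ * G * (T * N) = Tᵀ * G * (-1) := by
    rw [← Matrix.mul_assoc, ← h22, ← hN, h12]
    simp [hG]
  have h2 : T * N = -1 := by
    have := congrArg (fun M => (Tᵀ * G)⁻¹ * M) h1
    simpa only [nonsing_inv_mul_cancel_left _ _ hTG] using this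
  rw [h12, Matrix.neg_mul, Matrix.mul_assoc, h2]
  simp

lemma schur_posSemidef {n : ℕ} {P11 P12 P22 : Matrix (Fin n) (Fin n) ℝ}
    (hP : (fromBlocks P11 P12 P12ᵀ P22).PosDef) (h22 : P22.PosDef) :
    (P11 - P12 * P22⁻¹ * P12ᵀ).PosSemidef := by
  have := h22.isUnit.invertible
  have h := (PosDef.fromBlocks₂₂ P11 P12 h22).1 (by
    simpa [conjTranspose_eq_transpose_of_trivial] using hP.posSemidef)
  simpa [conjTranspose_eq_transpose_of_trivial] using h

theorem stationary_Phat_riccati {n m d : ℕ}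
    (A : Matrix (Fin n) (Fin n) ℝ) (B : Matrix (Fin n) (Fin m) ℝ)
    (C : Matrix (Fin d) (Fin n) ℝ)
    (Q : Matrix (Fin n) (Fin n) ℝ) (R : Matrix (Fin m) (Fin m) ℝ)
    (hQ : Q.PosSemidef) (hR : R.PosDef) (hC : C.rank = d)
    (AK : Matrix (Fin n) (Fin n) ℝ) (BK : Matrix (Fin n) (Fin d) ℝ)
    (CK : Matrix (Fin m) (Fin n) ℝ)
    (X P S : Matrix (Fin n ⊕ Fin n) (Fin n ⊕ Fin n) ℝ)
    (hX : X.PosDef) (hP : P.PosDef) (hS : S.PosDef)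
    (hLyapP : P = Qcl Q R CK + (Acl A B C AK BK CK)ᵀ * P * Acl A B C AK BK CK)
    (hLyapS : S = X + Acl A B C AK BK CK * S * (Acl A B C AK BK CK)ᵀ)
    (P11 P12 P22 S11 S12 S22 X11 X12 X22 : Matrix (Fin n) (Fin n) ℝ)
    (hP11 : P11 = P.toBlocks₁₁) (hP12 : P12 = P.toBlocks₁₂) (hP22 : P22 = P.toBlocks₂₂)
    (hS11 : S11 = S.toBlocks₁₁) (hS12 : S12 = S.toBlocks₁₂) (hS22 : S22 = S.toBlocks₂₂)
    (hX11 : X11 = X.toBlocks₁₁) (hX12 : X12 = X.toBlocks₁₂) (hX22 : X22 = X.toBlocks₂₂)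
    (hstat1 : Bᵀ * (P11 * A + P12 * (BK * C)) * S12
        + ((R + Bᵀ * P11 * B) * CK + Bᵀ * P12 * AK) * S22 = 0)
    (hstat2 : (P12ᵀ * A + P22 * (BK * C)) * S11 * Cᵀ
        + (P12ᵀ * (B * CK) + P22 * AK) * S12ᵀ * Cᵀ = 0)
    (hstat3 : (P12ᵀ * (B * CK) + P22 * AK) * S22
        + (P12ᵀ * A + P22 * (BK * C)) * S12 = 0)
    (Phat : Matrix (Fin n) (Fin n) ℝ)
    (hPhat : Phat = P11 - P12 * P22⁻¹ * P12ᵀ) :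
    Phat = Q + Aᵀ * Phat * A
      - Aᵀ * Phat * B * (R + Bᵀ * Phat * B)⁻¹ * (Bᵀ * Phat * A) := by
  have hPs : Pᵀ = P := by simpa [conjTranspose_eq_transpose_of_trivial] using hP.isHermitian.eq
  have hP21 : P.toBlocks₂₁ = P12ᵀ := by
    rw [hP12]
    ext i j
    exact (congrFun (congrFun hPs (Sum.inr i)) (Sum.inl j)).symm
  have hPb : P = fromBlocks P11 P12 P12ᵀ P22 := by
    rw [← hP21, hP11, hP12, hP22, fromBlocks_toBlocks]
  have hPD22 : P22.PosDef := by
    rw [hP22]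
    exact hP.submatrix Sum.inr_injective
  have hSD22 : S22.PosDef := by
    rw [hS22]
    exact hS.submatrix Sum.inr_injective
  have hPhatD : Phat.PosSemidef := by
    rw [hPhat]
    exact schur_posSemidef (hPb ▸ hP) hPD22
  have hPhs : Phatᵀ = Phat := by
    simpa [conjTranspose_eq_transpose_of_trivial] using hPhatD.isHermitian.eq
  have h22s : P22ᵀ = P22 := by
    simpa [conjTranspose_eq_transpose_of_trivial] using hPD22.isHermitian.eq
  have hUD : (R + Bᵀ * Phat * B).PosDef := by
    refine hR.add_posSemidef ?_
    simpa [conjTranspose_eq_transpose_of_trivial] using hPhatD.conjTranspose_mul_mul_same B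
  have hu22 : IsUnit P22.det := (isUnit_iff_isUnit_det _).1 hPD22.isUnit
  have huS : IsUnit S22.det := (isUnit_iff_isUnit_det _).1 hSD22.isUnit
  have huU : IsUnit (R + Bᵀ * Phat * B).det := (isUnit_iff_isUnit_det _).1 hUD.isUnit
  have hUs : (R + Bᵀ * Phat * B)ᵀ = R + Bᵀ * Phat * B := by
    simpa [conjTranspose_eq_transpose_of_trivial] using hUD.isHermitian.eq
  obtain ⟨N, hNdef⟩ : ∃ N, N = P22⁻¹ * P12ᵀ := ⟨_, rfl⟩
  obtain ⟨T, hTdef⟩ : ∃ T, T = S12 * S22⁻¹ := ⟨_, rfl⟩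
  obtain ⟨D, hDdef⟩ : ∃ D, D = N * A + BK * C := ⟨_, rfl⟩
  have hN : P12ᵀ = P22 * N := by rw [hNdef, mul_nonsing_inv_cancel_left _ _ hu22]
  have hN' : P12 = Nᵀ * P22 := by
    rw [← transpose_transpose P12, hN, transpose_mul, h22s]
  have hP11' : P11 = Phat + Nᵀ * P22 * N := by
    rw [← hN', hPhat, hNdef, Matrix.mul_assoc]
    abel
  have hS12T : S12 = T * S22 := by rw [hTdef, nonsing_inv_mul_cancel_right _ _ huS]
  have hE : BK * C = D - N * A := by rw [hDdef]; abel
  -- Stationarity in `AK` determines `AK`.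
  have hAK : AK = -(N * (B * CK)) - D * T := by
    have h : P22 * (N * (B * CK) + AK + D * T) * S22 = 0 := by
      rw [← hstat3, hN, hS12T, hDdef]
      simp only [Matrix.mul_add, Matrix.add_mul, Matrix.mul_assoc]
    have h' := congrArg (fun M => P22⁻¹ * (M * S22⁻¹)) h
    simp only [mul_nonsing_inv_cancel_right _ _ huS, nonsing_inv_mul_cancel_left _ _ hu22,
      Matrix.zero_mul, Matrix.mul_zero] at h'
    rw [← sub_eq_zero, ← h']
    abel
  -- Stationarity in `CK` determines `CK`.
  have hCK0 : (R + Bᵀ * Phat * B) * CK = -(Bᵀ * Phat * A * T) := by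
    have h : (Bᵀ * Phat * A * T + (R + Bᵀ * Phat * B) * CK) * S22 = 0 := by
      rw [← hstat1, hE, hAK, hS12T, hP11', hN']
      simp only [Matrix.mul_add, Matrix.add_mul, Matrix.mul_sub, Matrix.sub_mul, Matrix.mul_neg,
        Matrix.neg_mul, Matrix.mul_assoc]
      abel
    have h' := congrArg (fun M => M * S22⁻¹) h
    simp only [mul_nonsing_inv_cancel_right _ _ huS, Matrix.zero_mul] at h'
    rw [← sub_eq_zero, ← h']
    abel
  have hblocks := hLyapP
  rw [hPb, Qcl, Acl, fromBlocks_transpose, fromBlocks_multiply, fromBlocks_multiply,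
    fromBlocks_add, fromBlocks_inj] at hblocks
  obtain ⟨e11, e12, -, e22⟩ := hblocks
  have k11 : P11 = Q + Aᵀ * Phat * A + Dᵀ * P22 * D := by
    rw [e11, hE, hP11', hN']
    simp only [transpose_sub, transpose_mul, transpose_transpose, h22s, Matrix.mul_add,
      Matrix.add_mul, Matrix.mul_sub, Matrix.sub_mul, Matrix.mul_assoc]
    abel
  have k12 : P12 = (Bᵀ * Phat * A)ᵀ * CK - Dᵀ * P22 * D * T := by
    rw [e12, hE, hAK, hP11', hN']
    simp only [transpose_sub, transpose_mul, transpose_transpose, h22s, hPhs, Matrix.mul_add,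
      Matrix.add_mul, Matrix.mul_sub, Matrix.sub_mul, Matrix.mul_neg,
      Matrix.mul_assoc, zero_add]
    abel
  have k22 : P22 = CKᵀ * ((R + Bᵀ * Phat * B) * CK) + Tᵀ * (Dᵀ * P22 * D) * T := by
    refine e22.trans ?_
    rw [hAK, hP11', hN']
    simp only [transpose_sub, transpose_neg, transpose_mul, transpose_transpose, h22s,
      Matrix.mul_add, Matrix.add_mul, Matrix.mul_sub, Matrix.sub_mul, Matrix.mul_neg,
      Matrix.neg_mul, Matrix.mul_assoc]
    abel
  have hF : Aᵀ * Phat * B = (Bᵀ * Phat * A)ᵀ := by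
    simp only [transpose_mul, transpose_transpose, hPhs, Matrix.mul_assoc]
  rw [hF]
  generalize R + Bᵀ * Phat * B = U at *
  generalize Bᵀ * Phat * A = F at *
  have hCK : CK = -(U⁻¹ * F * T) := by
    have h' := congrArg (fun M => U⁻¹ * M) hCK0
    simpa only [nonsing_inv_mul_cancel_left _ _ huU, Matrix.mul_neg, Matrix.mul_assoc] using h'
  have hUis : U⁻¹ᵀ = U⁻¹ := by rw [transpose_nonsing_inv, hUs]
  have hG : (Fᵀ * U⁻¹ * F + Dᵀ * P22 * D)ᵀ = Fᵀ * U⁻¹ * F + Dᵀ * P22 * D := by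
    simp only [transpose_add, transpose_mul, transpose_transpose, h22s, hUis, Matrix.mul_assoc]
  have key := schur_term_eq (G := Fᵀ * U⁻¹ * F + Dᵀ * P22 * D) (T := T) hu22 hG hN
    (by
      refine k12.trans ?_
      rw [hCK]
      simp only [Matrix.add_mul, Matrix.mul_neg, Matrix.mul_assoc]
      abel)
    (by
      refine k22.trans ?_
      rw [hCK0, hCK]
      simp only [transpose_neg, transpose_mul, hUis, Matrix.mul_add, Matrix.add_mul,
        Matrix.mul_neg, Matrix.neg_mul, Matrix.mul_assoc, neg_neg])
  have hfin : Phat = P11 - P12 * N := by rw [hPhat, hNdef, Matrix.mul_assoc]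
  calc Phat = P11 - P12 * N := hfin
    _ = Q + Aᵀ * Phat * A - Fᵀ * U⁻¹ * F := by
      rw [key, k11]
      abel
end

section
/- In the stationarity setting, the Schur complement Σ̂ = Σ11 − Σ12 Σ22^{-1} Σ12^T satisfies the discrete-time algebraic Riccati equation Σ̂ = Δ_X + A Σ̂ A^T − A Σ̂ C^T (C Σ̂ C^T)^{-1} C Σ̂ A^T, where Δ_X = X11 − X12 X22^{-1} X12^T. -/
/-! The proof works with `T = Σ12 Σ22⁻¹` and the substitutions `Σ12 = T Σ22`,
`Σ11 = Σ̂ + T Σ22 Tᵀ`. Write `b = B C_K`, `c = B_K C`, `N = A T + b`, `N' = c T + A_K`, so that the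
closed loop maps the columns of `[T; I]` to `[N; N']`.

The key point (`coupling`) is that the Lyapunov equation for `P`, together with the first and third
stationarity conditions, gives `P12ᵀ T = -P22`; in particular `T` is invertible and
`T P22⁻¹ P12ᵀ = -1`. Multiplying the second and third conditions by `T P22⁻¹` then yields
`A Σ̂ Cᵀ = T B_K C Σ̂ Cᵀ`, that is, `L* = T B_K`, and `N = T N'`.

Inserting these relations into the Lyapunov equation for `Σ` (`riccati_of_relations`), the
off-diagonal block forces `X12 = T X22`, so `Δ_X = X11 - T X22 Tᵀ`, and the combination
`Σ̂ = Σ11 - T Σ22 Tᵀ` of the diagonal blocks becomes the Riccati equation. -/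

open Matrix

/-- The cross-coupling identity `Tᵀ P12 + P22 = 0`. It is stated in a general ring: the
letters `a, b, c, k` stand for `A, B C_K, B_K C, A_K`, `p11, p12, p21, p22` for the blocks of
`P`, `r` for `C_Kᵀ R C_K`, a primed letter for a transpose. With `Σ22`
cancelled and after transposition, `h1` is the first stationarity condition multiplied by `C_Kᵀ`,
and `h3` is the third. -/
lemma coupling {M : Type*} [Ring M] {b k a' b' c' k' t' p11 p12 p21 p22 r : M}
    (e12 : p12 = (a' * p11 + c' * p21) * b + (a' * p12 + c' * p22) * k)
    (e22 : p22 = r + ((b' * p11 + k' * p21) * b + (b' * p12 + k' * p22) * k))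
    (h1 : ((t' * a' + b') * p11 + (t' * c' + k') * p21) * b + r = 0)
    (h3 : (t' * a' + b') * p12 + (t' * c' + k') * p22 = 0) :
    t' * p12 + p22 = 0 := by
  have h3k : ((t' * a' + b') * p12 + (t' * c' + k') * p22) * k = 0 := by rw [h3, zero_mul]
  calc t' * p12 + p22
      = t' * ((a' * p11 + c' * p21) * b + (a' * p12 + c' * p22) * k)
        + (r + ((b' * p11 + k' * p21) * b + (b' * p12 + k' * p22) * k)) := by
          rw [← e12, ← e22]
    _ = (((t' * a' + b') * p11 + (t' * c' + k') * p21) * b + r)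
        + ((t' * a' + b') * p12 + (t' * c' + k') * p22) * k := by noncomm_ring
    _ = 0 := by rw [h1, h3k, add_zero]

/-- Elimination in the Lyapunov equation for `Σ`, whose blocks are written as `Σ11 = s + t z t'`,
`Σ12 = t z`, `Σ21 = z t'`, `Σ22 = z` with `s = Σ̂`; a primed letter stands for a
transpose. The proof regroups each block equation around `a * t + b` and `c * t + k`, the two blocks
of the closed-loop image of the block column `[t; 1]`. -/
lemma riccati_of_relations {M : Type*} [Ring M]
    {a b c k a' b' c' k' t t' s z x11 x12 x22 : M}
    (e11 : s + t * z * t' = x11 + ((a * (s + t * z * t') + b * (z * t')) * a'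
      + (a * (t * z) + b * z) * b'))
    (e12 : t * z = x12 + ((a * (s + t * z * t') + b * (z * t')) * c'
      + (a * (t * z) + b * z) * k'))
    (e22 : z = x22 + ((c * (s + t * z * t') + k * (z * t')) * c'
      + (c * (t * z) + k * z) * k'))
    (hN : a * t + b = t * (c * t + k)) (hN' : t' * a' + b' = (t' * c' + k') * t')
    (hL : a * s * c' = t * c * s * c') (hL' : c * s * a' = c * s * c' * t') :
    x12 = t * x22 ∧ s = x11 - t * x22 * t' + a * s * a' - t * c * s * a' := by
  have f11 : s + t * z * t' = x11 + a * s * a' + (a * t + b) * z * (t' * a' + b') := by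
    refine e11.trans ?_; noncomm_ring
  have f12 : t * z = x12 + a * s * c' + (a * t + b) * z * (t' * c' + k') := by
    refine e12.trans ?_; noncomm_ring
  have f22 : z = x22 + c * s * c' + (c * t + k) * z * (t' * c' + k') := by
    refine e22.trans ?_; noncomm_ring
  have g22 : t * z = t * x22 + t * c * s * c' + t * (c * t + k) * z * (t' * c' + k') := by
    refine (congrArg (t * ·) f22).trans ?_; noncomm_ring
  have hx : x12 = t * x22 := by
    rw [hL, hN] at f12
    have h := f12.symm.trans g22
    exact add_right_cancel (add_right_cancel h)
  refine ⟨hx, ?_⟩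
  have g : t * z * t' = t * x22 * t' + t * c * s * a'
      + t * (c * t + k) * z * ((t' * c' + k') * t') := by
    have : t * c * s * a' = t * (c * s * c' * t') := by rw [← hL']; noncomm_ring
    rw [this]
    refine (congrArg (· * t') g22).trans ?_; noncomm_ring
  rw [hN, hN'] at f11
  refine (eq_sub_of_add_eq f11).trans ?_
  rw [g]
  abel

theorem stationary_Sigmahat_riccati {n m d : ℕ}
    (A : Matrix (Fin n) (Fin n) ℝ) (B : Matrix (Fin n) (Fin m) ℝ)
    (C : Matrix (Fin d) (Fin n) ℝ)
    (Q : Matrix (Fin n) (Fin n) ℝ) (R : Matrix (Fin m) (Fin m) ℝ)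
    (hQ : Q.PosSemidef) (hR : R.PosDef) (hC : C.rank = d)
    (AK : Matrix (Fin n) (Fin n) ℝ) (BK : Matrix (Fin n) (Fin d) ℝ)
    (CK : Matrix (Fin m) (Fin n) ℝ)
    (X P S : Matrix (Fin n ⊕ Fin n) (Fin n ⊕ Fin n) ℝ)
    (hX : X.PosDef) (hP : P.PosDef) (hS : S.PosDef)
    (hLyapP : P = Qcl Q R CK + (Acl A B C AK BK CK)ᵀ * P * Acl A B C AK BK CK)
    (hLyapS : S = X + Acl A B C AK BK CK * S * (Acl A B C AK BK CK)ᵀ)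
    (P11 P12 P22 S11 S12 S22 X11 X12 X22 : Matrix (Fin n) (Fin n) ℝ)
    (hP11 : P11 = P.toBlocks₁₁) (hP12 : P12 = P.toBlocks₁₂) (hP22 : P22 = P.toBlocks₂₂)
    (hS11 : S11 = S.toBlocks₁₁) (hS12 : S12 = S.toBlocks₁₂) (hS22 : S22 = S.toBlocks₂₂)
    (hX11 : X11 = X.toBlocks₁₁) (hX12 : X12 = X.toBlocks₁₂) (hX22 : X22 = X.toBlocks₂₂)
    (hstat1 : Bᵀ * (P11 * A + P12 * (BK * C)) * S12
        + ((R + Bᵀ * P11 * B) * CK + Bᵀ * P12 * AK) * S22 = 0)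
    (hstat2 : (P12ᵀ * A + P22 * (BK * C)) * S11 * Cᵀ
        + (P12ᵀ * (B * CK) + P22 * AK) * S12ᵀ * Cᵀ = 0)
    (hstat3 : (P12ᵀ * (B * CK) + P22 * AK) * S22
        + (P12ᵀ * A + P22 * (BK * C)) * S12 = 0)
    (Shat DX : Matrix (Fin n) (Fin n) ℝ)
    (hShat : Shat = S11 - S12 * S22⁻¹ * S12ᵀ)
    (hDX : DX = X11 - X12 * X22⁻¹ * X12ᵀ) :
    Shat = DX + A * Shat * Aᵀ
      - A * Shat * Cᵀ * (C * Shat * Cᵀ)⁻¹ * (C * Shat * Aᵀ) := by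
  have tr : ∀ {M : Matrix (Fin n ⊕ Fin n) (Fin n ⊕ Fin n) ℝ}, M.PosDef →
      Mᵀ = M := fun h => by simpa [conjTranspose_eq_transpose_of_trivial] using h.isHermitian.eq
  have eP : P = fromBlocks P11 P12 P12ᵀ P22 := by
    have h21 : P.toBlocks₂₁ = P12ᵀ := by
      rw [hP12]; nth_rewrite 1 [← tr hP]; rfl
    rw [hP11, hP12, hP22, ← hP12, ← h21, hP12, fromBlocks_toBlocks]
  have eS : S = fromBlocks S11 S12 S12ᵀ S22 := by
    have h21 : S.toBlocks₂₁ = S12ᵀ := by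
      rw [hS12]; nth_rewrite 1 [← tr hS]; rfl
    rw [hS11, hS12, hS22, ← hS12, ← h21, hS12, fromBlocks_toBlocks]
  have eX : X = fromBlocks X11 X12 X12ᵀ X22 := by
    have h21 : X.toBlocks₂₁ = X12ᵀ := by
      rw [hX12]; nth_rewrite 1 [← tr hX]; rfl
    rw [hX11, hX12, hX22, ← hX12, ← h21, hX12, fromBlocks_toBlocks]
  clear hP11 hP12 hP22 hS11 hS12 hS22 hX11 hX12 hX22
  have tP := tr hP
  have tS := tr hS
  rw [eP, fromBlocks_transpose, fromBlocks_inj] at tP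
  rw [eS, fromBlocks_transpose, fromBlocks_inj] at tS
  obtain ⟨tP11, -, -, tP22⟩ := tP
  obtain ⟨tS11, -, -, tS22⟩ := tS
  have pd22 : ∀ {M : Matrix (Fin n ⊕ Fin n) (Fin n ⊕ Fin n) ℝ}
      {M11 M12 M21 M22 : Matrix (Fin n) (Fin n) ℝ}, M.PosDef →
      M = fromBlocks M11 M12 M21 M22 → M22.PosDef := by
    intro M M11 M12 M21 M22 h e
    have := h.submatrix (e := Sum.inr) Sum.inr_injective
    rw [e] at this
    exact this
  have uP : IsUnit P22.det := (isUnit_iff_isUnit_det _).1 (pd22 hP eP).isUnit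
  have uS : IsUnit S22.det := (isUnit_iff_isUnit_det _).1 (pd22 hS eS).isUnit
  have uX : IsUnit X22.det := (isUnit_iff_isUnit_det _).1 (pd22 hX eX).isUnit
  -- `Σ̂` is a Schur complement, and `C` has full row rank, so `C Σ̂ Cᵀ` is invertible
  have pdShat : Shat.PosDef := by
    have := (pd22 hS eS).isUnit.invertible
    have h := eS ▸ hS
    have hpsd := h.posSemidef
    have hunit := (isUnit_iff_isUnit_det _).1 h.isUnit
    rw [← conjTranspose_eq_transpose_of_trivial,
      PosDef.fromBlocks₂₂ _ _ (pd22 hS eS), conjTranspose_eq_transpose_of_trivial,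
      ← hShat] at hpsd
    rw [det_fromBlocks₂₂, invOf_eq_nonsing_inv, ← hShat] at hunit
    exact hpsd.posDef_iff_isUnit.2 ((isUnit_iff_isUnit_det _).2 (isUnit_of_mul_isUnit_right hunit))
  have uC : IsUnit (C * Shat * Cᵀ).det := by
    rw [← isUnit_iff_isUnit_det, ← conjTranspose_eq_transpose_of_trivial]
    refine (pdShat.mul_mul_conjTranspose_same ?_).isUnit
    rw [vecMul_injective_iff, linearIndependent_iff_card_eq_finrank_span, Fintype.card_fin]
    exact hC.symm.trans C.rank_eq_finrank_span_row
  have tShat : Shatᵀ = Shat := by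
    simpa [conjTranspose_eq_transpose_of_trivial] using pdShat.isHermitian.eq
  obtain ⟨T, hT⟩ : ∃ T, T = S12 * S22⁻¹ := ⟨_, rfl⟩
  have eS12 : S12 = T * S22 := by rw [hT, nonsing_inv_mul_cancel_right _ _ uS]
  have eS21 : S12ᵀ = S22 * Tᵀ := by rw [eS12, transpose_mul, tS22]
  have eS11 : S11 = Shat + T * S22 * Tᵀ := by
    rw [hShat, ← hT, eS21, Matrix.mul_assoc]; abel
  clear hShat
  obtain ⟨b, hb⟩ : ∃ b, b = B * CK := ⟨_, rfl⟩
  obtain ⟨c, hc⟩ : ∃ c, c = BK * C := ⟨_, rfl⟩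
  rw [eP, Acl, Qcl, fromBlocks_transpose, fromBlocks_multiply, fromBlocks_multiply,
    fromBlocks_add, fromBlocks_inj, ← hb, ← hc] at hLyapP
  rw [eS, eX, Acl, fromBlocks_transpose, fromBlocks_multiply, fromBlocks_multiply,
    fromBlocks_add, fromBlocks_inj, ← hb, ← hc, eS21, eS12, eS11] at hLyapS
  obtain ⟨-, p12, -, p22⟩ := hLyapP
  obtain ⟨s11, s12, -, s22⟩ := hLyapS
  rw [← hc] at hstat1
  rw [← hb, ← hc] at hstat2 hstat3
  -- the stationarity conditions, with `Σ22` cancelled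
  have h3 : P12ᵀ * (A * T + b) + P22 * (c * T + AK) = 0 := by
    have : (P12ᵀ * (A * T + b) + P22 * (c * T + AK)) * S22 = 0 := by
      rw [← hstat3, eS12]; noncomm_ring
    simpa [mul_nonsing_inv_cancel_right _ _ uS] using congrArg (· * S22⁻¹) this
  have h1 : bᵀ * (P11 * (A * T + b) + P12 * (c * T + AK)) + CKᵀ * R * CK = 0 := by
    have : (bᵀ * (P11 * (A * T + b) + P12 * (c * T + AK)) + CKᵀ * R * CK) * S22 = 0 := by
      have h := congrArg (CKᵀ * ·) hstat1
      simp only [Matrix.mul_zero] at h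
      rw [← h, eS12, hb, transpose_mul]
      simp only [Matrix.mul_add, Matrix.add_mul, Matrix.mul_assoc]
      abel
    simpa [mul_nonsing_inv_cancel_right _ _ uS] using congrArg (· * S22⁻¹) this
  have tR : Rᵀ = R := by
    simpa [conjTranspose_eq_transpose_of_trivial] using hR.isHermitian.eq
  have key : Tᵀ * P12 + P22 = 0 := by
    rw [zero_add] at p12
    refine coupling p12 p22 ?_ ?_
    · have h := congrArg transpose h1
      simp only [transpose_add, transpose_mul, transpose_transpose, tP11, tR, transpose_zero] at h
      rw [← h, Matrix.mul_assoc CKᵀ]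
    · have h := congrArg transpose h3
      simpa only [transpose_add, transpose_mul, transpose_transpose, tP22, transpose_zero] using h
  have key' : P12ᵀ * T = -P22 := by
    have h := congrArg transpose key
    simp only [transpose_add, transpose_mul, transpose_transpose, tP22, transpose_zero] at h
    exact eq_neg_of_add_eq_zero_left h
  have hTW : T * (P22⁻¹ * P12ᵀ) = -1 := by
    have h : P22⁻¹ * P12ᵀ * -T = 1 := by
      rw [Matrix.mul_neg, Matrix.mul_assoc, key', Matrix.mul_neg, neg_neg, nonsing_inv_mul _ uP]
    rw [mul_eq_one_comm] at h
    rw [← h, Matrix.neg_mul, neg_neg]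
  have elim : ∀ {l : ℕ} (U V : Matrix (Fin n) (Fin l) ℝ),
      P12ᵀ * U + P22 * V = 0 → U = T * V := by
    intro l U V h
    have h' := congrArg (fun M => T * (P22⁻¹ * M)) h
    simp only [Matrix.mul_add, Matrix.mul_zero, nonsing_inv_mul_cancel_left _ _ uP] at h'
    rw [← Matrix.mul_assoc P22⁻¹, ← Matrix.mul_assoc, hTW, Matrix.neg_mul, Matrix.one_mul] at h'
    exact (neg_add_eq_zero.1 h')
  have hN := elim _ _ h3
  have hL : A * Shat * Cᵀ = T * (c * Shat * Cᵀ) := by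
    refine elim _ _ ?_
    -- the third condition expresses `P12ᵀ b + P22 A_K` through `T`, which turns `Σ11` into `Σ̂`
    have h := congrArg (· * (S22 * Tᵀ * Cᵀ)) h3
    simp only [Matrix.zero_mul] at h
    rw [eS11, eS21] at hstat2
    rw [← sub_eq_zero.2 (hstat2.trans h.symm)]
    simp only [Matrix.mul_add, Matrix.add_mul, Matrix.mul_assoc]
    abel
  have hLc : A * Shat * cᵀ = T * c * Shat * cᵀ := by
    have h := congrArg (· * BKᵀ) hL
    rw [hc, transpose_mul] at *
    simpa only [Matrix.mul_assoc] using h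
  obtain ⟨hx, hs⟩ := riccati_of_relations s11 s12 s22 hN
    (by simpa only [transpose_add, transpose_mul] using congrArg transpose hN) hLc
    (by simpa only [transpose_mul, transpose_transpose, tShat, Matrix.mul_assoc]
          using congrArg transpose hLc)
  have tX22 : X22ᵀ = X22 := by
    simpa [conjTranspose_eq_transpose_of_trivial] using (pd22 hX eX).isHermitian.eq
  have eDX : DX = X11 - T * X22 * Tᵀ := by
    rw [hDX, hx, mul_nonsing_inv_cancel_right _ _ uX, transpose_mul, tX22, Matrix.mul_assoc]
  have eL : A * Shat * Cᵀ * (C * Shat * Cᵀ)⁻¹ = T * BK := by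
    have : A * Shat * Cᵀ = T * BK * (C * Shat * Cᵀ) := by
      rw [hL, hc]; simp only [Matrix.mul_assoc]
    rw [this, mul_nonsing_inv_cancel_right _ _ uC]
  have eY : T * BK * (C * Shat * Aᵀ) = T * c * Shat * Aᵀ := by
    rw [hc]; simp only [Matrix.mul_assoc]
  rw [eL, eY, eDX]
  exact hs
end

section
/- Let 𝒫 be a map from controller triples (A_K', B_K', C_K') ∈ ℝ^{n×n} × ℝ^{n×d} × ℝ^{m×n} to symmetric 2n×2n real matrices that is Fréchet differentiable at K0 = (A_K, B_K, C_K) and satisfies the Lyapunov equation 𝒫(K') = Qcl(K') + Acl(K')^T 𝒫(K') Acl(K') for all K' in a neighborhood of K0. Let X ∈ ℝ^{2n×2n} be symmetric, define J(K') = Tr(𝒫(K') X), suppose Acl(K0) is Schur stable, and let Σ be a symmetric solution of Σ = X + Acl(K0) Σ Acl(K0)^T. Write P = 𝒫(K0), with n×n blocks P11, P12, P22 of P and Σ11, Σ12, Σ22 of Σ. Then the Fréchet derivative of J at K0 in any direction (ΔA, ΔB, ΔC) equals Tr(G_A^T ΔA) + Tr(G_B^T ΔB) + Tr(G_C^T ΔC),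 where G_C = 2 B^T (P11 A + P12 B_K C) Σ12 + 2 ((R + B^T P11 B) C_K + B^T P12 A_K) Σ22, G_B = 2 (P12^T A + P22 B_K C) Σ11 C^T + 2 (P12^T B C_K + P22 A_K) Σ12^T C^T, and G_A = 2 (P12^T B C_K + P22 A_K) Σ22 + 2 (P12^T A + P22 B_K C) Σ12. -/
/-!
Differentiating the Lyapunov equation `P = Qcl + Aclᵀ P Acl` along a line through the controller `K₀`
in the direction `D` gives `dP - Aclᵀ dP Acl = dQ + dAclᵀ P Acl + Aclᵀ P dAcl`. Substituting
`X = S - Acl S Aclᵀ` and using cyclicity of the trace moves the Lyapunov operator onto `dP`, so that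
`tr (dP X) = tr (dQ S) + 2 tr ((P Acl S)ᵀ dAcl)` (`trace_lyapunov_adjoint`). The unknown `dP` has been
eliminated, and expanding the right-hand side into blocks (`trace_block_gradient`) yields the
claimed gradients.
-/

open Matrix

attribute [local instance] Matrix.normedAddCommGroup Matrix.normedSpace

/-- Product rule for matrix-valued curves. It is proved entrywise because the sup norm on matrices is
not submultiplicative, so the product rule for normed algebras does not apply. -/
lemma hasDerivAt_matrix_mul {a b c : Type*} [Fintype a] [Fintype b] [Fintype c]
    {M : ℝ → Matrix a b ℝ} {N : ℝ → Matrix b c ℝ} {M' : Matrix a b ℝ} {N' : Matrix b c ℝ} {t : ℝ}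
    (hM : HasDerivAt M M' t) (hN : HasDerivAt N N' t) :
    HasDerivAt (fun s => M s * N s) (M' * N t + M t * N') t := by
  refine hasDerivAt_pi.2 fun i => hasDerivAt_pi.2 fun j => ?_
  have hM' := fun k => hasDerivAt_pi.1 (hasDerivAt_pi.1 hM i) k
  have hN' := fun k => hasDerivAt_pi.1 (hasDerivAt_pi.1 hN k) j
  have h := HasDerivAt.fun_sum (u := Finset.univ) fun k _ => (hM' k).mul (hN' k)
  rw [Finset.sum_add_distrib] at h
  exact h

lemma hasDerivAt_matrix_transpose {a b : Type*} [Fintype a] [Fintype b]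
    {M : ℝ → Matrix a b ℝ} {M' : Matrix a b ℝ} {t : ℝ} (hM : HasDerivAt M M' t) :
    HasDerivAt (fun s => (M s)ᵀ) M'ᵀ t :=
  hasDerivAt_pi.2 fun i => hasDerivAt_pi.2 fun j => hasDerivAt_pi.1 (hasDerivAt_pi.1 hM j) i

lemma hasDerivAt_matrix_fromBlocks {a b c e : Type*} [Fintype a] [Fintype b] [Fintype c] [Fintype e]
    {M₁ : ℝ → Matrix a c ℝ} {M₂ : ℝ → Matrix a e ℝ} {M₃ : ℝ → Matrix b c ℝ} {M₄ : ℝ → Matrix b e ℝ}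
    {M₁' : Matrix a c ℝ} {M₂' : Matrix a e ℝ} {M₃' : Matrix b c ℝ} {M₄' : Matrix b e ℝ} {t : ℝ}
    (h₁ : HasDerivAt M₁ M₁' t) (h₂ : HasDerivAt M₂ M₂' t)
    (h₃ : HasDerivAt M₃ M₃' t) (h₄ : HasDerivAt M₄ M₄' t) :
    HasDerivAt (fun s => fromBlocks (M₁ s) (M₂ s) (M₃ s) (M₄ s))
      (fromBlocks M₁' M₂' M₃' M₄') t := by
  refine hasDerivAt_pi.2 fun i => hasDerivAt_pi.2 fun j => ?_
  rcases i with i | i <;> rcases j with j | j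
  · exact hasDerivAt_pi.1 (hasDerivAt_pi.1 h₁ i) j
  · exact hasDerivAt_pi.1 (hasDerivAt_pi.1 h₂ i) j
  · exact hasDerivAt_pi.1 (hasDerivAt_pi.1 h₃ i) j
  · exact hasDerivAt_pi.1 (hasDerivAt_pi.1 h₄ i) j

lemma hasDerivAt_matrix_trace {a : Type*} [Fintype a]
    {M : ℝ → Matrix a a ℝ} {M' : Matrix a a ℝ} {t : ℝ} (hM : HasDerivAt M M' t) :
    HasDerivAt (fun s => (M s).trace) M'.trace t :=
  HasDerivAt.fun_sum (u := Finset.univ) fun i _ => hasDerivAt_pi.1 (hasDerivAt_pi.1 hM i) i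

lemma trace_of_fromBlocks {a b : Type*} [Fintype a] [Fintype b] (M₁ : Matrix a a ℝ)
    (M₂ : Matrix a b ℝ) (M₃ : Matrix b a ℝ) (M₄ : Matrix b b ℝ) :
    (fromBlocks M₁ M₂ M₃ M₄).trace = M₁.trace + M₄.trace := by
  simp [Matrix.trace, Fintype.sum_sum_type]

/-- The maps `Y ↦ Y - Lᵀ Y L` and `Y ↦ Y - L Y Lᵀ` are adjoint for the trace pairing; hence
the derivative `dP` of a solution of the Lyapunov equation, paired with `X`, is expressed through `S`
and the derivatives `dL`, `dQ` of the data. -/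
lemma trace_lyapunov_adjoint {a : Type*} [Fintype a] {P L S X dP dL dQ : Matrix a a ℝ}
    (hP : Pᵀ = P) (hS : Sᵀ = S) (hX : S = X + L * S * Lᵀ)
    (hdP : dP = dQ + ((dLᵀ * P + Lᵀ * dP) * L + Lᵀ * P * dL)) :
    (dP * X).trace = (dQ * S).trace + 2 * ((P * L * S)ᵀ * dL).trace := by
  have hX' : X = S - L * S * Lᵀ := eq_sub_of_add_eq hX.symm
  have h1 : (dP * (L * S * Lᵀ)).trace = (Lᵀ * dP * L * S).trace := by
    rw [← Matrix.mul_assoc, Matrix.trace_mul_comm]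
    simp only [Matrix.mul_assoc]
  have h2 : (dLᵀ * P * L * S).trace = ((P * L * S)ᵀ * dL).trace := by
    rw [← Matrix.trace_transpose]
    simp only [Matrix.transpose_mul, Matrix.transpose_transpose, Matrix.mul_assoc]
  have h3 : (Lᵀ * P * dL * S).trace = ((P * L * S)ᵀ * dL).trace := by
    rw [Matrix.trace_mul_comm]
    simp only [Matrix.transpose_mul, hP, hS, Matrix.mul_assoc]
  have h4 : (dP * S).trace = (dQ * S).trace + (dLᵀ * P * L * S).trace
      + (Lᵀ * dP * L * S).trace + (Lᵀ * P * dL * S).trace := by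
    conv_lhs => rw [hdP]
    simp only [Matrix.add_mul, Matrix.trace_add]
    ring
  rw [hX', Matrix.mul_sub, Matrix.trace_sub, h1, h4, h2, h3]
  ring

/-- Block expansion of `tr (dQ S) + 2 tr ((P Acl S)ᵀ dAcl)`, where `dQ` and `dAcl` are the
derivatives of `Qcl` and `Acl` in the direction `(DA, DB, DC)`. -/
lemma trace_block_gradient {n m d : ℕ}
    (A : Matrix (Fin n) (Fin n) ℝ) (B : Matrix (Fin n) (Fin m) ℝ)
    (C : Matrix (Fin d) (Fin n) ℝ) (R : Matrix (Fin m) (Fin m) ℝ) (hR : Rᵀ = R)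
    (AK : Matrix (Fin n) (Fin n) ℝ) (BK : Matrix (Fin n) (Fin d) ℝ) (CK : Matrix (Fin m) (Fin n) ℝ)
    (P11 P12 P22 S11 S12 S22 : Matrix (Fin n) (Fin n) ℝ) (hS22 : S22ᵀ = S22)
    (DA : Matrix (Fin n) (Fin n) ℝ) (DB : Matrix (Fin n) (Fin d) ℝ)
    (DC : Matrix (Fin m) (Fin n) ℝ) :
    (fromBlocks 0 0 0 (DCᵀ * R * CK + CKᵀ * R * DC) * fromBlocks S11 S12 S12ᵀ S22).trace
      + 2 * ((fromBlocks P11 P12 P12ᵀ P22 * Acl A B C AK BK CK * fromBlocks S11 S12 S12ᵀ S22)ᵀ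
          * fromBlocks 0 (B * DC) (DB * C) DA).trace
    = ((2 • ((P12ᵀ * (B * CK) + P22 * AK) * S22)
        + 2 • ((P12ᵀ * A + P22 * (BK * C)) * S12))ᵀ * DA).trace
      + ((2 • ((P12ᵀ * A + P22 * (BK * C)) * S11 * Cᵀ)
        + 2 • ((P12ᵀ * (B * CK) + P22 * AK) * S12ᵀ * Cᵀ))ᵀ * DB).trace
      + ((2 • (Bᵀ * (P11 * A + P12 * (BK * C)) * S12)
        + 2 • (((R + Bᵀ * P11 * B) * CK + Bᵀ * P12 * AK) * S22))ᵀ * DC).trace := by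
  set M12 := (P11 * A + P12 * (BK * C)) * S12 + (P11 * (B * CK) + P12 * AK) * S22 with hM12
  set M21 := (P12ᵀ * A + P22 * (BK * C)) * S11 + (P12ᵀ * (B * CK) + P22 * AK) * S12ᵀ with hM21
  set M22 := (P12ᵀ * A + P22 * (BK * C)) * S12 + (P12ᵀ * (B * CK) + P22 * AK) * S22 with hM22
  have hA : 2 • ((P12ᵀ * (B * CK) + P22 * AK) * S22)
        + 2 • ((P12ᵀ * A + P22 * (BK * C)) * S12) = 2 • M22 := by
    rw [hM22, smul_add, add_comm]
  have hB : 2 • ((P12ᵀ * A + P22 * (BK * C)) * S11 * Cᵀ)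
        + 2 • ((P12ᵀ * (B * CK) + P22 * AK) * S12ᵀ * Cᵀ) = 2 • (M21 * Cᵀ) := by
    rw [hM21, ← smul_add, ← Matrix.add_mul]
  have hC : 2 • (Bᵀ * (P11 * A + P12 * (BK * C)) * S12)
        + 2 • (((R + Bᵀ * P11 * B) * CK + Bᵀ * P12 * AK) * S22)
      = 2 • (Bᵀ * M12) + 2 • (R * CK * S22) := by
    rw [hM12, ← smul_add, ← smul_add]
    congr 1
    simp only [Matrix.add_mul, Matrix.mul_add, Matrix.mul_assoc]
    abel
  -- The two terms of the derivative of `CKᵀ R CK` contribute equally, as `R` and `S22` are symmetric.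
  have hQ1 : (DCᵀ * R * CK * S22).trace = ((R * CK * S22)ᵀ * DC).trace := by
    rw [← Matrix.trace_transpose]
    simp only [Matrix.transpose_mul, Matrix.transpose_transpose, Matrix.mul_assoc]
  have hQ2 : (CKᵀ * R * DC * S22).trace = ((R * CK * S22)ᵀ * DC).trace := by
    rw [Matrix.trace_mul_comm]
    simp only [Matrix.transpose_mul, hR, hS22, Matrix.mul_assoc]
  have hB' : (M21ᵀ * (DB * C)).trace = ((M21 * Cᵀ)ᵀ * DB).trace := by
    rw [← Matrix.mul_assoc, Matrix.trace_mul_comm]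
    simp only [Matrix.transpose_mul, Matrix.transpose_transpose, Matrix.mul_assoc]
  have hC' : (M12ᵀ * (B * DC)).trace = ((Bᵀ * M12)ᵀ * DC).trace := by
    simp only [Matrix.transpose_mul, Matrix.transpose_transpose, Matrix.mul_assoc]
  rw [hA, hB, hC, Acl, fromBlocks_multiply, fromBlocks_multiply, fromBlocks_multiply, ← hM12, ← hM21, ← hM22,
    fromBlocks_transpose, fromBlocks_multiply, trace_of_fromBlocks,
    trace_of_fromBlocks]
  simp only [Matrix.mul_zero, Matrix.zero_mul, zero_add, Matrix.add_mul, Matrix.trace_add,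
    Matrix.transpose_add, two_smul, Matrix.trace_zero, hQ1, hQ2, hB', hC']
  ring

theorem dLQR_policy_gradient {n m d : ℕ}
    (A : Matrix (Fin n) (Fin n) ℝ) (B : Matrix (Fin n) (Fin m) ℝ)
    (C : Matrix (Fin d) (Fin n) ℝ)
    (Q : Matrix (Fin n) (Fin n) ℝ) (R : Matrix (Fin m) (Fin m) ℝ)
    (hQ : Q.PosSemidef) (hR : R.PosDef)
    (AK : Matrix (Fin n) (Fin n) ℝ) (BK : Matrix (Fin n) (Fin d) ℝ)
    (CK : Matrix (Fin m) (Fin n) ℝ)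
    (P' : Matrix (Fin n) (Fin n) ℝ × Matrix (Fin n) (Fin d) ℝ × Matrix (Fin m) (Fin n) ℝ
        → Matrix (Fin n ⊕ Fin n) (Fin n ⊕ Fin n) ℝ)
    (hsym : ∀ K', (P' K')ᵀ = P' K')
    (hdiff : DifferentiableAt ℝ P' (AK, BK, CK))
    (hLyap : ∀ᶠ K' in nhds (AK, BK, CK),
        P' K' = Qcl Q R K'.2.2
          + (Acl A B C K'.1 K'.2.1 K'.2.2)ᵀ * P' K' * Acl A B C K'.1 K'.2.1 K'.2.2)
    (X : Matrix (Fin n ⊕ Fin n) (Fin n ⊕ Fin n) ℝ) (hXsym : Xᵀ = X)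
    (J : Matrix (Fin n) (Fin n) ℝ × Matrix (Fin n) (Fin d) ℝ × Matrix (Fin m) (Fin n) ℝ → ℝ)
    (hJ : ∀ K', J K' = (P' K' * X).trace)
    (hstable : SchurStable (Acl A B C AK BK CK))
    (S : Matrix (Fin n ⊕ Fin n) (Fin n ⊕ Fin n) ℝ) (hSsym : Sᵀ = S)
    (hSLyap : S = X + Acl A B C AK BK CK * S * (Acl A B C AK BK CK)ᵀ)
    (P11 P12 P22 S11 S12 S22 : Matrix (Fin n) (Fin n) ℝ)
    (hP11 : P11 = (P' (AK, BK, CK)).toBlocks₁₁)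
    (hP12 : P12 = (P' (AK, BK, CK)).toBlocks₁₂)
    (hP22 : P22 = (P' (AK, BK, CK)).toBlocks₂₂)
    (hS11 : S11 = S.toBlocks₁₁) (hS12 : S12 = S.toBlocks₁₂) (hS22 : S22 = S.toBlocks₂₂)
    (GA : Matrix (Fin n) (Fin n) ℝ) (GB : Matrix (Fin n) (Fin d) ℝ)
    (GC : Matrix (Fin m) (Fin n) ℝ)
    (hGC : GC = 2 • (Bᵀ * (P11 * A + P12 * (BK * C)) * S12)
        + 2 • (((R + Bᵀ * P11 * B) * CK + Bᵀ * P12 * AK) * S22))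
    (hGB : GB = 2 • ((P12ᵀ * A + P22 * (BK * C)) * S11 * Cᵀ)
        + 2 • ((P12ᵀ * (B * CK) + P22 * AK) * S12ᵀ * Cᵀ))
    (hGA : GA = 2 • ((P12ᵀ * (B * CK) + P22 * AK) * S22)
        + 2 • ((P12ᵀ * A + P22 * (BK * C)) * S12)) :
    ∀ (DA : Matrix (Fin n) (Fin n) ℝ) (DB : Matrix (Fin n) (Fin d) ℝ)
      (DC : Matrix (Fin m) (Fin n) ℝ),
      fderiv ℝ J (AK, BK, CK) (DA, DB, DC)
        = (GAᵀ * DA).trace + (GBᵀ * DB).trace + (GCᵀ * DC).trace := by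
  intro DA DB DC
  have hRt : Rᵀ = R := by simpa [Matrix.IsHermitian] using hR.isHermitian
  have hP0 := hsym (AK, BK, CK)
  have hPb : P' (AK, BK, CK) = fromBlocks P11 P12 P12ᵀ P22 := by
    have h21 : P12ᵀ = (P' (AK, BK, CK)).toBlocks₂₁ := by
      rw [hP12]
      conv_rhs => rw [← hP0]
      rfl
    rw [h21, hP11, hP12, hP22, fromBlocks_toBlocks]
  have hSb : S = fromBlocks S11 S12 S12ᵀ S22 := by
    have h21 : S12ᵀ = S.toBlocks₂₁ := by
      rw [hS12]
      conv_rhs => rw [← hSsym]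
      rfl
    rw [h21, hS11, hS12, hS22, fromBlocks_toBlocks]
  have hS22t : S22ᵀ = S22 := by
    rw [hS22]
    conv_rhs => rw [← hSsym]
    rfl
  -- Restrict everything to the line `t ↦ K₀ + t D`.
  have hline : ∀ {a b : ℕ} (K D : Matrix (Fin a) (Fin b) ℝ),
      HasDerivAt (fun t : ℝ => K + t • D) D 0 := fun K D => by
    have h := ((hasDerivAt_id (0 : ℝ)).smul_const D).const_add K
    rw [one_smul] at h
    exact h
  set γ : ℝ → Matrix (Fin n) (Fin n) ℝ × Matrix (Fin n) (Fin d) ℝ × Matrix (Fin m) (Fin n) ℝ :=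
    fun t => (AK + t • DA, BK + t • DB, CK + t • DC) with hγ
  have hγ0 : γ 0 = (AK, BK, CK) := by simp [hγ]
  have hγd : HasDerivAt γ (DA, DB, DC) 0 :=
    (hline AK DA).prodMk ((hline BK DB).prodMk (hline CK DC))
  set dP := fderiv ℝ P' (AK, BK, CK) (DA, DB, DC) with hdPdef
  have hPd : HasDerivAt (fun t => P' (γ t)) dP 0 := by
    have h : HasFDerivAt P' (fderiv ℝ P' (AK, BK, CK)) (γ 0) := by
      rw [hγ0]; exact hdiff.hasFDerivAt
    exact h.comp_hasDerivAt 0 hγd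
  have hLd : HasDerivAt (fun t => Acl A B C (γ t).1 (γ t).2.1 (γ t).2.2)
      (fromBlocks 0 (B * DC) (DB * C) DA) 0 := by
    refine hasDerivAt_matrix_fromBlocks (hasDerivAt_const _ _) ?_ ?_ (hline AK DA)
    · simpa using hasDerivAt_matrix_mul (hasDerivAt_const (0 : ℝ) B) (hline CK DC)
    · simpa using hasDerivAt_matrix_mul (hline BK DB) (hasDerivAt_const (0 : ℝ) C)
  have hQd : HasDerivAt (fun t => Qcl Q R (γ t).2.2)
      (fromBlocks 0 0 0 (DCᵀ * R * CK + CKᵀ * R * DC)) 0 := by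
    refine hasDerivAt_matrix_fromBlocks (hasDerivAt_const _ _) (hasDerivAt_const _ _)
      (hasDerivAt_const _ _) ?_
    have h := hasDerivAt_matrix_mul (hasDerivAt_matrix_mul
      (hasDerivAt_matrix_transpose (hline CK DC)) (hasDerivAt_const (0 : ℝ) R)) (hline CK DC)
    rw [Matrix.mul_zero, add_zero, zero_smul, add_zero] at h
    exact h
  have hev : ∀ᶠ t in nhds (0 : ℝ), P' (γ t) = Qcl Q R (γ t).2.2
      + (Acl A B C (γ t).1 (γ t).2.1 (γ t).2.2)ᵀ * P' (γ t)
        * Acl A B C (γ t).1 (γ t).2.1 (γ t).2.2 := by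
    have hc := hγd.continuousAt.tendsto
    rw [hγ0] at hc
    exact hc.eventually hLyap
  have hdP := hPd.unique ((hQd.add (hasDerivAt_matrix_mul (hasDerivAt_matrix_mul
    (hasDerivAt_matrix_transpose hLd) hPd) hLd)).congr_of_eventuallyEq hev)
  rw [hγ0] at hdP
  -- `J` is differentiable as a trace of `P'`, so its derivative can be read off along the line.
  have hJdiff : DifferentiableAt ℝ J (AK, BK, CK) := by
    let T : Matrix (Fin n ⊕ Fin n) (Fin n ⊕ Fin n) ℝ →ₗ[ℝ] ℝ :=
      (Matrix.traceLinearMap _ ℝ ℝ).comp (LinearMap.mulRight ℝ X)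
    have hJT : J = fun K' => LinearMap.toContinuousLinearMap T (P' K') := funext hJ
    rw [hJT]
    exact (LinearMap.toContinuousLinearMap T).differentiableAt.comp _ hdiff
  have hJd : HasDerivAt (fun t => J (γ t)) (fderiv ℝ J (AK, BK, CK) (DA, DB, DC)) 0 := by
    have h : HasFDerivAt J (fderiv ℝ J (AK, BK, CK)) (γ 0) := by
      rw [hγ0]; exact hJdiff.hasFDerivAt
    exact h.comp_hasDerivAt 0 hγd
  have hJd' : HasDerivAt (fun t => J (γ t)) (dP * X).trace 0 := by
    simp only [hJ]
    simpa using hasDerivAt_matrix_trace (hasDerivAt_matrix_mul hPd (hasDerivAt_const (0 : ℝ) X))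
  rw [hJd.unique hJd', trace_lyapunov_adjoint hP0 hSsym hSLyap hdP, hPb, hSb, hGA, hGB, hGC]
  exact trace_block_gradient A B C R hRt AK BK CK P11 P12 P22 S11 S12 S22 hS22t DA DB DC
end
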